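/- arXiv:2508.19214 — 4 statements merged into one kernel-verified Lean document; each statement's English description precedes it below -/
import Mathlib

section
/- Let F = ℚ(√d) be an imaginary quadratic field with d = p₁···p_r < 0 a squarefree product of (signed) primes with d ≡ 1 (mod 4), and let 𝔭_i be the prime of O_F above p_i. Then the 2-torsion subgroup cl(F)[2] of the class group is generated by the classes [𝔭₁],...,[𝔭_r], and these satisfy the relation [𝔭₁] + ... + [𝔭_r] = 0. -/
open NumberField
open scoped nonZeroDivisors

theorem aux_dvd {R : Type*} [CommRing R] [CharZero R] (s : R ≃+* R)
    (nm : ∀ x, ∃ n : ℤ, 0 ≤ n ∧ x * s x = n)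
    (a b : ℤ) (h : (a : R) ∣ (b : R)) : a ∣ b := by
  obtain ⟨u, hu⟩ := h
  obtain ⟨m, -, hm⟩ := nm u
  have h1 : (b : R) * s b = (a * s a) * (u * s u) := by
    rw [hu, map_mul]; ring
  rw [hm, map_intCast, map_intCast] at h1
  have h2 : b * b = a * a * m := by exact_mod_cast h1
  rw [← Int.pow_dvd_pow_iff (n := 2) (by norm_num)]
  exact ⟨m, by rw [sq, sq, h2]⟩

theorem aux_norm {R : Type*} [CommRing R] [IsDedekindDomain R] [CharZero R] (s : R ≃+* R)
    (ss : ∀ x, s (s x) = x)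
    (tr : ∀ x, ∃ t : ℤ, x + s x = t)
    (nm : ∀ x, ∃ n : ℤ, 0 ≤ n ∧ x * s x = n)
    (hdiv : ∀ (y : R) (g : ℤ), g ≠ 0 → (∃ t : ℤ, y + s y = ((g * t : ℤ) : R)) →
      (∃ n : ℤ, y * s y = ((g ^ 2 * n : ℤ) : R)) → (g : R) ∣ y)
    (I : Ideal R) (hI : I ≠ ⊥) :
    ∃ g : ℤ, 0 < g ∧ I * I.map s = Ideal.span {(g : R)} := by
  obtain ⟨g0, hg0⟩ := (IsPrincipalIdealRing.principal
    ((I * I.map s).comap (Int.castRingHom R))).principal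
  have key : ∀ n : ℤ, (n : R) ∈ I * I.map s ↔ g0 ∣ n := by
    intro n
    rw [← Ideal.mem_span_singleton, Ideal.span, ← hg0, Ideal.mem_comap]; simp
  have mems : ∀ a ∈ I, s a ∈ I.map s := fun a ha => Ideal.mem_map_of_mem _ ha
  have hN : ∀ a ∈ I, ∀ n : ℤ, a * s a = n → g0 ∣ n := by
    intro a ha n hn
    rw [← key, ← hn]
    exact Ideal.mul_mem_mul ha (mems a ha)
  have hg0' : g0 ≠ 0 := by
    rintro rfl
    obtain ⟨a, ha, ha0⟩ := Submodule.exists_mem_ne_zero_of_ne_bot hI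
    obtain ⟨n, -, hn⟩ := nm a
    have := hN a ha n hn
    rw [zero_dvd_iff] at this
    rw [this, Int.cast_zero, mul_eq_zero] at hn
    rcases hn with h | h
    · exact ha0 h
    · exact ha0 (by simpa using h)
  have main : I * I.map s = Ideal.span {(g0 : R)} := by
    apply le_antisymm
    · have : I.map s = Ideal.span (s '' I) := rfl
      rw [this]
      conv_lhs => rw [← Ideal.span_eq I]
      rw [Ideal.span_mul_span', Ideal.span_le]
      rintro _ ⟨a, ha, _, ⟨b, hb, rfl⟩, rfl⟩
      rw [SetLike.mem_coe, Ideal.mem_span_singleton]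
      rw [SetLike.mem_coe] at ha
      rw [Ideal.span_eq, SetLike.mem_coe] at hb
      obtain ⟨n, -, hn⟩ := nm a
      obtain ⟨m, -, hm⟩ := nm b
      obtain ⟨t, ht⟩ := tr (a * s b)
      obtain ⟨n', rfl⟩ := hN a ha n hn
      obtain ⟨m', rfl⟩ := hN b hb m hm
      have : g0 ∣ t := by
        rw [← key, ← ht, map_mul, ss, mul_comm (s a) b]
        exact Ideal.add_mem _ (Ideal.mul_mem_mul ha (mems b hb)) (Ideal.mul_mem_mul hb (mems a ha))
      obtain ⟨t', rfl⟩ := this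
      refine hdiv _ g0 hg0' ⟨t', ht⟩ ⟨n' * m', ?_⟩
      rw [map_mul, ss]
      calc a * s b * (s a * b) = (a * s a) * (b * s b) := by ring
        _ = _ := by rw [hn, hm]; push_cast; ring
    · rw [Ideal.span_singleton_le_iff_mem, key]
  refine ⟨|g0|, abs_pos.mpr hg0', ?_⟩
  rw [main]
  rcases abs_choice g0 with h | h <;> rw [h]
  rw [Int.cast_neg, Ideal.span_singleton_neg]

theorem aux_amb {R : Type*} [CommRing R] [IsDedekindDomain R] [CharZero R] (s : R ≃+* R)
    (ss : ∀ x, s (s x) = x)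
    (nm : ∀ x, ∃ n : ℤ, 0 ≤ n ∧ x * s x = n)
    (I : Ideal R) (hI : I ≠ ⊥) (g : ℤ) (hg : 0 < g) (hIg : I * I.map s = Ideal.span {(g : R)})
    (γ : R) (hγ : I ^ 2 = Ideal.span {γ}) :
    ∃ β : R, β ≠ 0 ∧ (I * Ideal.span {β}).map s = I * Ideal.span {β} := by
  have hIs : I.map s ≠ ⊥ := by
    intro h
    rw [h, Ideal.mul_bot, eq_comm, Ideal.span_singleton_eq_bot] at hIg
    exact hg.ne' (by exact_mod_cast hIg)
  obtain ⟨n, hn0, hn⟩ := nm γ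
  have h1 : Ideal.span {(n : R)} = Ideal.span {((g ^ 2 : ℤ) : R)} := by
    have e1 : (I.map s) ^ 2 = Ideal.span {s γ} := by
      rw [← Ideal.map_pow, hγ, Ideal.map_span]; simp
    rw [← hn, ← Ideal.span_singleton_mul_span_singleton, ← hγ, ← e1, ← mul_pow, hIg,
      Ideal.span_singleton_pow]
    simp
  rw [Ideal.span_singleton_eq_span_singleton] at h1
  have h2 : n = g ^ 2 :=
    Int.dvd_antisymm hn0 (by positivity) (aux_dvd s nm _ _ h1.dvd) (aux_dvd s nm _ _ h1.symm.dvd)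
  by_cases hc : (g : R) + γ = 0
  · refine ⟨1, one_ne_zero, ?_⟩
    have : γ = - (g : R) := by linear_combination hc
    rw [Ideal.span_singleton_one, Ideal.mul_top]
    rw [this, Ideal.span_singleton_neg, ← hIg, sq] at hγ
    exact (mul_left_cancel₀ hI hγ).symm
  · refine ⟨s (g + γ), by rw [Ne, EmbeddingLike.map_eq_zero_iff]; exact hc, ?_⟩
    rw [Ideal.map_mul, Ideal.map_span, Set.image_singleton]
    have e : s (s ((g:R) + γ)) = g + γ := ss _
    change I.map s * Ideal.span {s (s ((g:R) + γ))} = _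
    rw [e]
    apply mul_left_cancel₀ hI
    rw [← mul_assoc, ← mul_assoc, hIg, ← sq, hγ, Ideal.span_singleton_mul_span_singleton,
      Ideal.span_singleton_mul_span_singleton]
    congr 2
    rw [map_add, map_intCast, mul_add, mul_add, hn, h2]
    push_cast; ring

theorem aux_ind {R : Type*} [CommRing R] [IsDedekindDomain R] (s : R ≃+* R)
    (ss : ∀ x, s (s x) = x) (H : Subgroup (ClassGroup R))
    (hnorm : ∀ I : Ideal R, I ≠ ⊥ → ∃ g : R, I * I.map s = Ideal.span {g})
    (hQ : ∀ Q : (Ideal R)⁰, (Q : Ideal R).IsPrime → (Q : Ideal R).map s = Q → ClassGroup.mk0 Q ∈ H)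
    (J : Ideal R) : ∀ (hJ : J ∈ (Ideal R)⁰), J.map s = J → ClassGroup.mk0 ⟨J, hJ⟩ ∈ H := by
  induction J using WellFoundedGT.induction with
  | ind J ih =>
  intro hJ hs
  have hJ0 : J ≠ ⊥ := nonZeroDivisors.ne_zero hJ
  by_cases ht : J = ⊤
  · subst ht
    have : ClassGroup.mk0 (⟨⊤, hJ⟩ : (Ideal R)⁰) = 1 := by
      rw [ClassGroup.mk0_eq_one_iff]; infer_instance
    rw [this]; exact H.one_mem
  obtain ⟨Q, hQm, hJQ⟩ := Ideal.exists_le_maximal J ht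
  have hQ0 : Q ≠ ⊥ := fun h => hJ0 (le_bot_iff.mp (h ▸ hJQ))
  have hQt : Q ≠ ⊤ := hQm.ne_top
  have mss : ∀ I : Ideal R, (I.map s).map s = I := by
    intro I
    change (I.map (s : R →+* R)).map (s : R →+* R) = I
    rw [Ideal.map_map]
    have : (s : R →+* R).comp (s : R →+* R) = RingHom.id R := by ext x; exact ss x
    have h2 := Ideal.map_id I
    rw [← this] at h2
    exact h2
  have step : ∀ K : Ideal R, K ≠ ⊤ → K ≠ ⊥ → K.map s = K → (∀ hK : K ∈ (Ideal R)⁰,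
      ClassGroup.mk0 ⟨K, hK⟩ ∈ H) → K ∣ J → ClassGroup.mk0 ⟨J, hJ⟩ ∈ H := by
    rintro K hKt hK0 hKs hKH ⟨L, rfl⟩
    have hL0 : L ≠ ⊥ := by rintro rfl; simp at hJ0
    have hK' : K ∈ (Ideal R)⁰ := mem_nonZeroDivisors_of_ne_zero hK0
    have hL' : L ∈ (Ideal R)⁰ := mem_nonZeroDivisors_of_ne_zero hL0
    have e : (⟨K * L, hJ⟩ : (Ideal R)⁰) = ⟨K, hK'⟩ * ⟨L, hL'⟩ := rfl
    rw [e, map_mul]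
    refine H.mul_mem (hKH _) (ih L ?_ hL' ?_)
    · refine lt_of_le_of_ne Ideal.mul_le_right ?_
      intro h
      apply hKt
      rw [← Ideal.one_eq_top]
      apply mul_right_cancel₀ hL0
      rw [h, one_mul]
    · rw [Ideal.map_mul, hKs] at hs
      exact mul_left_cancel₀ hK0 hs
  by_cases hQs : Q.map s = Q
  · exact step Q hQt hQ0 hQs (fun hK => hQ ⟨Q, hK⟩ hQm.isPrime hQs) (Ideal.dvd_iff_le.mpr hJQ)
  · obtain ⟨g, hg⟩ := hnorm Q hQ0
    have hsm : (Q.map s).IsMaximal := Ideal.map_isMaximal_of_equiv s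
    have hs0 : Q.map s ≠ ⊥ := by
      intro h
      apply hQ0
      rw [← mss Q, h, Ideal.map_bot]
    refine step (Q * Q.map s) ?_ ?_ ?_ ?_ ?_
    · intro h; exact hQt (top_le_iff.mp (h ▸ Ideal.mul_le_left))
    · exact mul_ne_zero hQ0 hs0
    · rw [Ideal.map_mul, mss, mul_comm]
    · intro hK
      have : ClassGroup.mk0 (⟨Q * Q.map s, hK⟩ : (Ideal R)⁰) = 1 := by
        rw [ClassGroup.mk0_eq_one_iff, hg]; exact ⟨g, rfl⟩
      rw [this]; exact H.one_mem
    · have hsJ : J ≤ Q.map s := by rw [← hs]; exact Ideal.map_mono hJQ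
      rw [Ideal.dvd_iff_le]
      have hc : IsCoprime Q (Q.map s) := by
        rw [Ideal.isCoprime_iff_sup_eq]
        exact Ideal.IsMaximal.coprime_of_ne hQm hsm (Ne.symm hQs)
      rw [Ideal.mul_eq_inf_of_coprime (Ideal.isCoprime_iff_sup_eq.mp hc)]
      exact le_inf hJQ hsJ

theorem aux_sq {R : Type*} [CommRing R] [IsDedekindDomain R] (A B : Ideal R)
    (h : A ^ 2 = B ^ 2) : A = B := by
  by_cases hA : A = 0
  · subst hA
    rw [zero_pow two_ne_zero, eq_comm] at h
    exact (pow_eq_zero_iff two_ne_zero |>.mp h).symm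
  have hB : B ≠ 0 := by
    rintro rfl
    rw [zero_pow two_ne_zero] at h
    exact hA (pow_eq_zero_iff two_ne_zero |>.mp h)
  have h2 := congrArg UniqueFactorizationMonoid.normalizedFactors h
  rw [UniqueFactorizationMonoid.normalizedFactors_pow,
    UniqueFactorizationMonoid.normalizedFactors_pow] at h2
  rw [← associated_iff_eq, UniqueFactorizationMonoid.associated_iff_normalizedFactors_eq_normalizedFactors hA hB]
  exact nsmul_right_injective two_ne_zero h2

theorem aux_setup (F : Type) [Field F] [NumberField F] (d : ℤ) (hneg : d < 0) (hd4 : d % 4 = 1)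
    (hdim : Module.finrank ℚ F = 2) (α : F) (hα : α ^ 2 = (d : F)) :
    ∃ (s : 𝓞 F ≃+* 𝓞 F) (a ω : 𝓞 F), (∀ x, s (s x) = x) ∧
    (∀ x, ∃ t : ℤ, x + s x = t) ∧
    (∀ x, ∃ n : ℤ, 0 ≤ n ∧ x * s x = n) ∧
    (∀ (y : 𝓞 F) (g : ℤ), g ≠ 0 → (∃ t : ℤ, y + s y = ((g * t : ℤ) : 𝓞 F)) →
      (∃ n : ℤ, y * s y = ((g ^ 2 * n : ℤ) : 𝓞 F)) → (g : 𝓞 F) ∣ y) ∧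
    a ^ 2 = d ∧ ω - s ω = a := by
  have hirr : ∀ q : ℚ, algebraMap ℚ F q ≠ α := by
    intro q h
    rw [← h, ← map_pow] at hα
    have h2 : q ^ 2 = d := by
      apply (algebraMap ℚ F).injective
      rw [hα]; simp
    have : (d : ℚ) < 0 := by exact_mod_cast hneg
    nlinarith [sq_nonneg q]
  have hdec : ∀ x : F, ∃ u v : ℚ, x = algebraMap ℚ F u + algebraMap ℚ F v * α := by
    have hli : LinearIndependent ℚ ![(1 : F), α] := by
      rw [LinearIndependent.pair_iff]
      intro u v h
      have hv : v = 0 := by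
        by_contra hv
        apply hirr (-u / v)
        have : algebraMap ℚ F v ≠ 0 := by simpa using hv
        rw [map_div₀, map_neg, div_eq_iff this]
        simp only [Algebra.smul_def, mul_one] at h
        linear_combination -h
      subst hv
      simpa using h
    have hsp := hli.span_eq_top_of_card_eq_finrank' (by simp [hdim])
    intro x
    have hx : x ∈ Submodule.span ℚ (Set.range ![(1 : F), α]) := hsp ▸ Submodule.mem_top
    rw [Matrix.range_cons, Matrix.range_cons, Matrix.range_empty, Set.union_empty,
      Set.singleton_union, Submodule.mem_span_pair] at hx
    obtain ⟨u, v, h⟩ := hx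
    exact ⟨u, v, by rw [← h]; simp [Algebra.smul_def]⟩
  have : Algebra.IsQuadraticExtension ℚ F := ⟨hdim⟩
  have : IsGalois ℚ F := ⟨⟩
  obtain ⟨σ, hσ⟩ : ∃ σ : F ≃ₐ[ℚ] F, σ α = - α := by
    by_contra hcon
    push Not at hcon
    have : α ∈ (⊥ : IntermediateField ℚ F) := by
      rw [IsGalois.mem_bot_iff_fixed]
      intro f
      have h1 : (f α) ^ 2 = α ^ 2 := by rw [← map_pow, hα]; simp
      rcases sq_eq_sq_iff_eq_or_eq_neg.mp h1 with h | h
      · exact h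
      · exact absurd h (hcon f)
    obtain ⟨q, hq⟩ := IntermediateField.mem_bot.mp this
    exact hirr q hq
  have hσx : ∀ u v : ℚ, σ (algebraMap ℚ F u + algebraMap ℚ F v * α) =
      algebraMap ℚ F u - algebraMap ℚ F v * α := by
    intro u v
    rw [map_add, map_mul, hσ, AlgEquiv.commutes, AlgEquiv.commutes]; ring
  have hint : ∀ (x : 𝓞 F) (q : ℚ), (x : F) = algebraMap ℚ F q → ∃ n : ℤ, q = n ∧ x = n := by
    intro x q h
    have h1 : IsIntegral ℤ (algebraMap ℚ F q) := h ▸ x.isIntegral_coe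
    rw [isIntegral_algebraMap_iff (algebraMap ℚ F).injective] at h1
    obtain ⟨n, hn⟩ := IsIntegrallyClosed.isIntegral_iff.mp h1
    refine ⟨n, by simpa using hn.symm, ?_⟩
    apply RingOfIntegers.ext
    rw [h, ← hn]; simp
  let s : 𝓞 F ≃+* 𝓞 F := RingOfIntegers.mapRingEquiv σ.toRingEquiv
  have hs : ∀ x : 𝓞 F, ((s x : 𝓞 F) : F) = σ x := fun x => rfl
  have haint : IsIntegral ℤ α := by
    refine ⟨Polynomial.X ^ 2 - Polynomial.C d, Polynomial.monic_X_pow_sub_C _ (by norm_num), ?_⟩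
    rw [← Polynomial.aeval_def]
    simp [hα, -eq_intCast]
  have hwint : IsIntegral ℤ ((1 + α) / 2) := by
    obtain ⟨k, hk⟩ : ∃ k, d = 4 * k + 1 := ⟨d / 4, by omega⟩
    refine ⟨Polynomial.X ^ 2 - (Polynomial.X + Polynomial.C k), ?_, ?_⟩
    · apply Polynomial.monic_X_pow_sub
      compute_degree
      norm_num
    · rw [← Polynomial.aeval_def]
      simp [-eq_intCast]
      rw [hk] at hα
      push_cast at hα
      linear_combination hα / 4
  refine ⟨s, ⟨α, haint⟩, ⟨(1 + α) / 2, hwint⟩, ?_, ?_, ?_, ?_, ?_, ?_⟩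
  · intro x
    apply RingOfIntegers.ext
    rw [hs, hs]
    obtain ⟨u, v, h⟩ := hdec x
    rw [h, hσx]
    have := hσx u (-v)
    rw [map_neg] at this
    rw [show algebraMap ℚ F u - algebraMap ℚ F v * α = algebraMap ℚ F u + - algebraMap ℚ F v * α by ring,
      this]
    ring
  · intro x
    obtain ⟨u, v, h⟩ := hdec x
    obtain ⟨n, -, hn⟩ := hint (x + s x) (2 * u) (by
      change (x : F) + ((s x : 𝓞 F) : F) = _
      rw [hs, h, hσx, map_mul, map_ofNat]; ring)
    exact ⟨n, hn⟩
  · intro x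
    obtain ⟨u, v, h⟩ := hdec x
    obtain ⟨n, h1, hn⟩ := hint (x * s x) (u ^ 2 - d * v ^ 2) (by
      change (x : F) * ((s x : 𝓞 F) : F) = _
      rw [hs, h, hσx, map_sub, map_mul, map_pow, map_pow, map_intCast, ← hα]; ring)
    refine ⟨n, ?_, hn⟩
    have : (d : ℚ) < 0 := by exact_mod_cast hneg
    have : (0 : ℚ) ≤ n := by rw [← h1]; nlinarith [sq_nonneg u, sq_nonneg v]
    exact_mod_cast this
  · rintro y g hg ⟨t, ht⟩ ⟨n, hn⟩
    have hgF : (g : F) ≠ 0 := by exact_mod_cast hg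
    have ht' : (y : F) + σ y = g * t := by
      rw [← hs, ← map_add, ht]; simp
    have hn' : (y : F) * σ y = g ^ 2 * n := by
      rw [← hs, ← map_mul, hn]; simp
    have : IsIntegral ℤ ((y : F) / g) := by
      refine ⟨Polynomial.X ^ 2 - (Polynomial.C t * Polynomial.X - Polynomial.C n), ?_, ?_⟩
      · apply Polynomial.monic_X_pow_sub
        compute_degree
        norm_num
      · rw [← Polynomial.aeval_def]
        simp [-eq_intCast]
        field_simp
        linear_combination (y : F) * ht' - hn'
    refine ⟨⟨_, this⟩, ?_⟩
    apply RingOfIntegers.ext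
    change (y : F) = ((g : 𝓞 F) : F) * ((y : F) / g)
    simp
    field_simp
  · apply RingOfIntegers.ext
    change α ^ 2 = ((d : 𝓞 F) : F)
    simpa using hα
  · apply RingOfIntegers.ext
    change (1 + α) / 2 - σ ((1 + α) / 2) = α
    rw [map_div₀, map_add, map_one, map_ofNat, hσ]
    ring

theorem aux_ram (F : Type) [Field F] [NumberField F] (hdim : Module.finrank ℚ F = 2)
    (p e d : ℤ) (hp : Prime p) (hd : d = p * e) (hsf : Squarefree d)
    (a : 𝓞 F) (ha : a ^ 2 = d) (Q : Ideal (𝓞 F)) (hQ : Q.IsPrime) (hpQ : (p : 𝓞 F) ∈ Q) :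
    Q = Ideal.span {(p : 𝓞 F), a} ∧ Q ^ 2 = Ideal.span {(p : 𝓞 F)} := by
  have hcop : IsCoprime p e := by
    rw [Prime.coprime_iff_not_dvd hp]
    rintro ⟨f, rfl⟩
    exact hp.not_isUnit (hsf p ⟨f, by rw [hd]; ring⟩)
  obtain ⟨x, y, hxy⟩ := hcop
  have hxy' : (x : 𝓞 F) * p + y * e = 1 := by exact_mod_cast hxy
  have hd' : (d : 𝓞 F) = p * e := by rw [hd]; push_cast; rfl
  have hsq : Ideal.span {(p : 𝓞 F), a} ^ 2 = Ideal.span {(p : 𝓞 F)} := by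
    apply le_antisymm
    · rw [sq, Ideal.span_pair_mul_span_pair, Ideal.span_le]
      rintro z (rfl | rfl | rfl | rfl) <;> rw [SetLike.mem_coe, Ideal.mem_span_singleton]
      · exact dvd_mul_right _ _
      · exact dvd_mul_right _ _
      · exact dvd_mul_left _ _
      · rw [← sq, ha, hd']; exact dvd_mul_right _ _
    · rw [Ideal.span_singleton_le_iff_mem, sq]
      have e0 : (p : 𝓞 F) = x * (p * p) + y * (a * a) := by
        rw [← sq a, ha, hd']
        linear_combination (-(p : 𝓞 F)) * hxy'
      have m1 : (p : 𝓞 F) ∈ Ideal.span {(p : 𝓞 F), a} := Ideal.subset_span (by simp)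
      have m2 : a ∈ Ideal.span {(p : 𝓞 F), a} := Ideal.subset_span (by simp)
      have e1 := Ideal.add_mem _ (Ideal.mul_mem_left _ (x : 𝓞 F) (Ideal.mul_mem_mul m1 m1))
        (Ideal.mul_mem_left _ (y : 𝓞 F) (Ideal.mul_mem_mul m2 m2))
      rwa [← e0] at e1
  have hrk : Module.finrank ℤ (𝓞 F) = 2 := by rw [RingOfIntegers.rank, hdim]
  have hnorm : Ideal.absNorm (Ideal.span {(p : 𝓞 F), a}) = p.natAbs := by
    have := congrArg Ideal.absNorm hsq
    rw [map_pow, Ideal.absNorm_span_singleton] at this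
    have h2 : Algebra.norm ℤ ((p : ℤ) : 𝓞 F) = p ^ 2 := by
      rw [← hrk, ← Algebra.norm_algebraMap]; simp
    rw [h2, Int.natAbs_pow] at this
    exact Nat.pow_left_injective (n := 2) (by norm_num) this
  have hpr : (Ideal.span {(p : 𝓞 F), a}).IsPrime := by
    apply Ideal.isPrime_of_irreducible_absNorm
    rw [hnorm]
    exact (Int.prime_iff_natAbs_prime.mp hp)
  have hle : Ideal.span {(p : 𝓞 F), a} ≤ Q := by
    rw [Ideal.span_le]
    rintro z (rfl | rfl)
    · exact hpQ
    · apply hQ.mem_of_pow_mem 2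
      rw [ha, hd']
      exact Ideal.mul_mem_right _ _ hpQ
  have hne : Ideal.span {(p : 𝓞 F), a} ≠ ⊥ := by
    intro h
    rw [h, Ideal.absNorm_bot] at hnorm
    exact hp.ne_zero (Int.natAbs_eq_zero.mp hnorm.symm)
  have hmax : (Ideal.span {(p : 𝓞 F), a}).IsMaximal := hpr.isMaximal hne
  have := hmax.eq_of_le hQ.ne_top hle
  exact ⟨this.symm, this ▸ hsq⟩

theorem aux_prime (F : Type) [Field F] [NumberField F] (hdim : Module.finrank ℚ F = 2)
    (s : 𝓞 F ≃+* 𝓞 F) (nm : ∀ x, ∃ n : ℤ, 0 ≤ n ∧ x * s x = n) (a ω : 𝓞 F) (hω : ω - s ω = a)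
    (Q : Ideal (𝓞 F)) (hQ : Q.IsPrime) (hs : Q.map s = Q)
    (g : ℤ) (hg : 0 < g) (hQg : Q * Q.map s = Ideal.span {(g : 𝓞 F)}) :
    Q.IsPrincipal ∨ a ∈ Q := by
  rw [hs] at hQg
  have hgQ : (g : 𝓞 F) ∈ Q := by
    apply Ideal.mul_le_left (I := Q) (J := Q)
    rw [hQg]; exact Ideal.mem_span_singleton_self _
  obtain ⟨q, hq, hqQ⟩ : ∃ q : ℕ, q.Prime ∧ (q : 𝓞 F) ∈ Q := by
    by_contra hcon
    push Not at hcon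
    lift g to ℕ using hg.le
    have hg1 : g ≠ 0 := by omega
    have h : ∀ n : ℕ, n ≠ 0 → (n : 𝓞 F) ∉ Q := by
      intro n
      induction n using induction_on_primes with
      | zero => simp
      | one => intro _; rw [Nat.cast_one, ← Ideal.eq_top_iff_one]; exact hQ.ne_top
      | prime_mul q m hq ih =>
        intro hm hQm
        rw [Nat.cast_mul] at hQm
        rcases hQ.mem_or_mem hQm with h | h
        · exact hcon q hq h
        · exact ih (right_ne_zero_of_mul hm) h
    exact h g hg1 (by simpa using hgQ)
  have hdvd : g ∣ (q : ℤ) ^ 2 := by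
    apply aux_dvd s nm
    rw [← Ideal.mem_span_singleton, ← hQg]
    push_cast
    rw [sq]
    exact Ideal.mul_mem_mul hqQ hqQ
  lift g to ℕ using hg.le
  have hdvd' : g ∣ q ^ 2 := by exact_mod_cast hdvd
  have hrk : Module.finrank ℤ (𝓞 F) = 2 := by rw [RingOfIntegers.rank, hdim]
  obtain ⟨k, hk, rfl⟩ := (Nat.dvd_prime_pow hq).mp hdvd'
  have hk' : k = 0 ∨ k = 1 ∨ k = 2 := by omega
  rcases hk' with rfl | rfl | rfl
  · exfalso
    apply hQ.ne_top
    rw [Ideal.eq_top_iff_one]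
    simpa using hgQ
  · right
    have hN : Ideal.absNorm Q = q := by
      have := congrArg Ideal.absNorm hQg
      rw [map_mul, pow_one, Int.cast_natCast, Ideal.absNorm_span_natCast, hrk, ← sq] at this
      exact Nat.pow_left_injective (n := 2) (by norm_num) this
    have hcard : Nat.card (𝓞 F ⧸ Q) = q := by
      rw [← hN]; rfl
    have : Fact q.Prime := ⟨hq⟩
    have h1 : (1 : 𝓞 F ⧸ Q) ≠ 0 := by
      have : Nontrivial (𝓞 F ⧸ Q) := Ideal.Quotient.nontrivial_iff.mpr hQ.ne_top
      exact one_ne_zero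
    obtain ⟨n, hn⟩ := AddSubgroup.mem_zmultiples_iff.mp
      (mem_zmultiples_of_prime_card (g' := Ideal.Quotient.mk Q ω) hcard h1)
    have h2 : ω - (n : 𝓞 F) ∈ Q := by
      rw [← Ideal.Quotient.eq_zero_iff_mem, map_sub, ← hn]; simp
    have h3 : s (ω - (n : 𝓞 F)) ∈ Q := by
      have : s (ω - (n : 𝓞 F)) ∈ Q.map s := Ideal.mem_map_of_mem _ h2
      rwa [hs] at this
    have : a = (ω - n) - s (ω - n) := by rw [map_sub, map_intCast, ← hω]; ring
    rw [this]
    exact Q.sub_mem h2 h3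
  · left
    have : Q = Ideal.span {(q : 𝓞 F)} := by
      apply aux_sq
      rw [sq, hQg, Ideal.span_singleton_pow]
      push_cast
      rfl
    rw [this]
    exact ⟨_, rfl⟩

theorem aux_mk0_sq {R : Type*} [CommRing R] [IsDedekindDomain R] (I : (Ideal R)⁰) :
    ClassGroup.mk0 I ^ 2 = 1 ↔ ((I : Ideal R) ^ 2).IsPrincipal := by
  have e : I ^ 2 = ⟨(I : Ideal R) ^ 2, pow_mem I.2 2⟩ := Subtype.ext (SubmonoidClass.coe_pow I 2)
  rw [← map_pow, e, ClassGroup.mk0_eq_one_iff]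

theorem aux_mk0_mul {R : Type*} [CommRing R] [IsDedekindDomain R] (I : Ideal R)
    (hI : I ∈ (Ideal R)⁰) (β : R) (hβ : β ≠ 0) (H : Subgroup (ClassGroup R))
    (h : ∀ hJ : I * Ideal.span {β} ∈ (Ideal R)⁰, ClassGroup.mk0 ⟨I * Ideal.span {β}, hJ⟩ ∈ H) :
    ClassGroup.mk0 ⟨I, hI⟩ ∈ H := by
  have hβ' : Ideal.span {β} ∈ (Ideal R)⁰ := by
    apply mem_nonZeroDivisors_of_ne_zero
    simpa using hβ
  have hJm := h (mul_mem hI hβ')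
  have e : (⟨I * Ideal.span {β}, mul_mem hI hβ'⟩ : (Ideal R)⁰) = ⟨I, hI⟩ * ⟨_, hβ'⟩ := rfl
  have e1 : ClassGroup.mk0 (⟨_, hβ'⟩ : (Ideal R)⁰) = 1 := by
    rw [ClassGroup.mk0_eq_one_iff]; exact ⟨_, rfl⟩
  rwa [e, map_mul, e1, mul_one] at hJm

theorem stmt10 (F : Type) [Field F] [NumberField F]
    (r : ℕ) (p : Fin r → ℤ) (hp : ∀ i, Prime (p i))
    (d : ℤ) (hd : d = ∏ i, p i) (hneg : d < 0) (hsf : Squarefree d) (hd4 : d % 4 = 1)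
    (hdim : Module.finrank ℚ F = 2) (α : F) (hα : α ^ 2 = (d : F))
    (P : Fin r → (Ideal (𝓞 F))⁰)
    (hPprime : ∀ i, (P i : Ideal (𝓞 F)).IsPrime)
    (hPover : ∀ i, algebraMap ℤ (𝓞 F) (p i) ∈ (P i : Ideal (𝓞 F))) :
    (∏ i, ClassGroup.mk0 (P i)) = 1 ∧
    ∀ x : ClassGroup (𝓞 F),
      x ∈ Subgroup.closure (Set.range fun i => ClassGroup.mk0 (P i)) ↔ x ^ 2 = 1 := by
  obtain ⟨s, a, ω, ss, tr, nm, hdiv, ha, hω⟩ := aux_setup F d hneg hd4 hdim α hα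
  have hpd : ∀ i, ∃ e, d = p i * e := by
    intro i
    rw [hd]
    exact Finset.dvd_prod_of_mem p (Finset.mem_univ i)
  have hram : ∀ i, ∀ Q : Ideal (𝓞 F), Q.IsPrime → ((p i : ℤ) : 𝓞 F) ∈ Q →
      Q = Ideal.span {((p i : ℤ) : 𝓞 F), a} ∧ Q ^ 2 = Ideal.span {((p i : ℤ) : 𝓞 F)} := by
    intro i Q hQ hpQ
    obtain ⟨e, he⟩ := hpd i
    exact aux_ram F hdim (p i) e d (hp i) he hsf a ha Q hQ hpQ
  have hP : ∀ i, ((p i : ℤ) : 𝓞 F) ∈ (P i : Ideal (𝓞 F)) := fun i => by simpa using hPover i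
  refine ⟨?_, ?_⟩
  · rw [← map_prod]
    refine (ClassGroup.mk0_eq_one_iff (∏ i, P i).2).mpr ?_
    have h : ((∏ i, P i : (Ideal (𝓞 F))⁰) : Ideal (𝓞 F)) = Ideal.span {a} := by
      apply aux_sq
      rw [Submonoid.coe_finsetProd, ← Finset.prod_pow,
        Finset.prod_congr rfl (fun i _ => (hram i _ (hPprime i) (hP i)).2),
        Ideal.prod_span_singleton, Ideal.span_singleton_pow, ha, hd]
      push_cast
      rfl
    rw [h]
    exact ⟨_, rfl⟩
  intro x
  constructor
  · intro hx
    induction hx using Subgroup.closure_induction with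
    | mem x hx =>
      obtain ⟨i, rfl⟩ := hx
      change ClassGroup.mk0 (P i) ^ 2 = 1
      rw [aux_mk0_sq, (hram i _ (hPprime i) (hP i)).2]
      exact ⟨_, rfl⟩
    | one => simp
    | mul x y _ _ hx hy => rw [mul_pow, hx, hy, one_mul]
    | inv x _ hx => rw [inv_pow, hx, inv_one]
  · intro hx
    obtain ⟨⟨I, hI⟩, rfl⟩ := ClassGroup.mk0_surjective x
    have hI0 : I ≠ ⊥ := nonZeroDivisors.ne_zero hI
    have hx2 := (aux_mk0_sq _).mp hx
    change (I ^ 2).IsPrincipal at hx2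
    obtain ⟨γ, hγ⟩ := hx2.principal
    have hnm := aux_norm s ss tr nm hdiv
    obtain ⟨g, hg, hIg⟩ := hnm I hI0
    obtain ⟨β, hβ, hJ⟩ := aux_amb s ss nm I hI0 g hg hIg γ hγ
    refine aux_mk0_mul I hI β hβ _ (fun hJ0 => aux_ind s ss _
      (fun I hI => (hnm I hI).imp' (fun g : ℤ => (g : 𝓞 F)) (fun g h => h.2)) ?_ _ hJ0 hJ)
    rintro ⟨Q, hQ0⟩ hQ hQs
    change Q.IsPrime at hQ
    change Q.map s = Q at hQs
    obtain ⟨g, hg, hQg⟩ := hnm Q (nonZeroDivisors.ne_zero hQ0)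
    rcases aux_prime F hdim s nm a ω hω Q hQ hQs g hg hQg with h | h
    · rw [(ClassGroup.mk0_eq_one_iff hQ0).mpr h]
      exact Subgroup.one_mem _
    · have h1 : (∏ i, ((p i : ℤ) : 𝓞 F)) ∈ Q := by
        have : (∏ i, ((p i : ℤ) : 𝓞 F)) = a * a := by
          rw [← sq, ha, hd]; push_cast; rfl
        rw [this]
        exact Q.mul_mem_left _ h
      rw [hQ.prod_mem_iff] at h1
      obtain ⟨i, -, hi⟩ := h1
      have h2 : Q = P i := (hram i Q hQ hi).1.trans (hram i _ (hPprime i) (hP i)).1.symm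
      apply Subgroup.subset_closure
      have h3 : P i = ⟨Q, hQ0⟩ := Subtype.ext h2.symm
      exact ⟨i, congrArg ClassGroup.mk0 h3⟩
end

section
/- Let F = ℚ(√d) with d = p₁···p_r < 0 squarefree, d ≡ 1 mod 4, each p_i a signed prime. Then cl(F)/2cl(F) ≅ (ℤ/2)^{r-1}, and it is isomorphic to Gal(F(√p₁,...,√p_r)/F). -/
open NumberField

set_option linter.unusedSectionVars false

structure GD (R : Type*) [CommRing R] [IsDedekindDomain R] [Module.Free ℤ R] [Module.Finite ℤ R]
    (r : ℕ) (p : Fin r → ℤ) where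
  s : R ≃+* R
  a : R
  w : R
  ss : ∀ x, s (s x) = x
  sa : s a = -a
  ha : a * a = ((∏ i, p i : ℤ) : R)
  hw : w - s w = a
  fix : ∀ x, s x = x → ∃ n : ℤ, x = n
  pos : ∀ x, ∃ n : ℕ, x * s x = n
  nrm : ∀ n : ℤ, Ideal.absNorm (Ideal.span {(n : R)}) = n.natAbs ^ 2
  hp : ∀ i, Prime (p i)
  hsf : Squarefree (∏ i, p i)
  hneg : ∏ i, p i < 0
  h4 : (∏ i, p i) % 4 = 1

namespace GD

section
variable {R : Type*} [CommRing R] [IsDedekindDomain R] [Module.Free ℤ R] [Module.Finite ℤ R]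
  [CharZero R] {r : ℕ} {p : Fin r → ℤ} (D : GD R r p)

lemma norm_ext {I J : Ideal R} (hI : I ≠ ⊥) (h : I ≤ J)
    (hn : Ideal.absNorm I = Ideal.absNorm J) : I = J := by
  obtain ⟨K, rfl⟩ := Ideal.dvd_iff_le.mpr h
  have h0 : Ideal.absNorm (J * K) ≠ 0 := by
    rwa [Ne, Ideal.absNorm_eq_zero_iff]
  rw [map_mul] at hn h0
  have : Ideal.absNorm K = 1 := by
    have hJ : Ideal.absNorm J ≠ 0 := fun h => h0 (by simp [h])
    exact (mul_eq_left₀ hJ).mp hn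
  rw [Ideal.absNorm_eq_one_iff] at this
  simp [this]

lemma norm_map (e : R ≃+* R) (I : Ideal R) : Ideal.absNorm (I.map e) = Ideal.absNorm I := by
  rw [Ideal.absNorm_apply, Ideal.absNorm_apply, Submodule.cardQuot_apply, Submodule.cardQuot_apply]
  exact (Nat.card_congr (Ideal.quotientEquiv I (I.map e) e rfl).toEquiv).symm

lemma dvd_int (D : GD R r p) {m n : ℤ} (h : (m : R) ∣ n) : m ∣ n := by
  obtain ⟨c, hc⟩ := h
  by_cases hm : m = 0
  · subst hm
    simp only [Int.cast_zero, zero_mul, Int.cast_eq_zero] at hc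
    simp [hc]
  have : D.s c = c := by
    have := congrArg D.s hc
    rw [map_mul, map_intCast, map_intCast, hc] at this
    exact (mul_left_cancel₀ (by exact_mod_cast hm) this).symm
  obtain ⟨k, rfl⟩ := D.fix c this
  exact ⟨k, by exact_mod_cast hc⟩

/-- the ramified prime -/
def P (i : Fin r) : Ideal R := Ideal.span {(p i : R), D.a}

lemma P_sq (i : Fin r) : D.P i * D.P i = Ideal.span {(p i : R)} := by
  have hd : ∏ i, p i = p i * ∏ j ∈ Finset.univ.erase i, p j :=
    (Finset.mul_prod_erase _ _ (Finset.mem_univ i)).symm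
  set m := ∏ j ∈ Finset.univ.erase i, p j
  have hco : IsCoprime (p i) m := by
    rw [(D.hp i).coprime_iff_not_dvd]
    rintro ⟨k, hk⟩
    have := D.hsf (p i) ⟨k, by rw [hd, hk]; ring⟩
    exact (D.hp i).not_isUnit this
  obtain ⟨u, v, huv⟩ := hco
  have ha := D.ha
  rw [hd] at ha
  push_cast at ha
  apply le_antisymm
  · rw [P, Ideal.span_pair_mul_span_pair, Ideal.span_le]
    rintro x (rfl | rfl | rfl | rfl) <;> rw [SetLike.mem_coe, Ideal.mem_span_singleton]
    · exact dvd_mul_right _ _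
    · exact dvd_mul_right _ _
    · exact dvd_mul_left _ _
    · rw [ha]; exact dvd_mul_right _ _
  · rw [Ideal.span_singleton_le_iff_mem]
    have h1 : (p i : R) ∈ D.P i := Ideal.subset_span (by simp)
    have h2 : D.a ∈ D.P i := Ideal.subset_span (by simp)
    have : (p i : R) = u * (p i * p i) + v * (D.a * D.a) := by
      rw [ha]
      have : ((u * p i + v * m : ℤ) : R) = 1 := by rw [huv]; simp
      push_cast at this
      linear_combination (-(p i : R)) * this
    rw [this]
    exact add_mem (Ideal.mul_mem_left _ _ (Ideal.mul_mem_mul h1 h1))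
      (Ideal.mul_mem_left _ _ (Ideal.mul_mem_mul h2 h2))

lemma p_ne (D : GD R r p) (i : Fin r) : (p i : R) ≠ 0 := by
  exact_mod_cast (D.hp i).ne_zero

lemma P_ne (i : Fin r) : D.P i ≠ ⊥ := by
  intro h
  have := D.P_sq i
  rw [h] at this
  have h2 : (p i : R) ∈ Ideal.span {(p i : R)} := Ideal.mem_span_singleton_self _
  rw [← this] at h2
  simp at h2
  exact (D.hp i).ne_zero h2

lemma P_norm (i : Fin r) : Ideal.absNorm (D.P i) = (p i).natAbs := by
  have := congrArg Ideal.absNorm (D.P_sq i)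
  rw [map_mul, D.nrm, ← sq] at this
  exact Nat.pow_left_injective (n := 2) (by norm_num) this

lemma P_map (i : Fin r) : (D.P i).map D.s = D.P i := by
  rw [P, Ideal.map_span, Set.image_pair, map_intCast, D.sa, Ideal.span_insert, Ideal.span_insert,
    Ideal.span_singleton_neg]

lemma map_map (I : Ideal R) : (I.map D.s).map D.s = I := by
  apply le_antisymm
  · rw [Ideal.map_le_iff_le_comap, Ideal.map_le_iff_le_comap]
    intro x hx
    rw [Ideal.mem_comap, Ideal.mem_comap, D.ss]
    exact hx
  · intro x hx
    rw [← D.ss x]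
    exact Ideal.mem_map_of_mem _ (Ideal.mem_map_of_mem _ hx)

lemma mem_map {I : Ideal R} {x : R} (h : x ∈ I) : D.s x ∈ I.map D.s := Ideal.mem_map_of_mem _ h

lemma prime_cases (Q : Ideal R) [hQ : Q.IsPrime] (h0 : Q ≠ ⊥) :
    (Q ≠ Q.map D.s ∧ ∃ q : ℤ, q ≠ 0 ∧ Q * Q.map D.s = Ideal.span {(q : R)}) ∨
    (∃ q : ℤ, q ≠ 0 ∧ Q = Ideal.span {(q : R)}) ∨ ∃ i, Q = D.P i := by
  have hN0 : Ideal.absNorm Q ≠ 0 := by rwa [Ne, Ideal.absNorm_eq_zero_iff]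
  have hN1 : Ideal.absNorm Q ≠ 1 := by rw [Ne, Ideal.absNorm_eq_one_iff]; exact hQ.ne_top
  obtain ⟨q, hq, hqQ⟩ : ∃ q : ℕ, q.Prime ∧ (q : R) ∈ Q := by
    have hm : (Ideal.absNorm Q : R) ∈ Q := Ideal.absNorm_mem Q
    revert hm
    generalize Ideal.absNorm Q = n at hN0
    induction n using Nat.recOnMul with
    | zero => simp at hN0
    | one => intro h; exact absurd ((Ideal.eq_top_iff_one _).mpr (by simpa using h)) hQ.ne_top
    | prime q hq => intro h; exact ⟨q, hq, h⟩
    | mul a b iha ihb =>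
      intro h
      push_cast at h
      rcases hQ.mem_or_mem h with h | h
      · exact iha (by rintro rfl; simp at hN0) h
      · exact ihb (by rintro rfl; simp at hN0) h
  have hle : Ideal.span {((q : ℤ) : R)} ≤ Q := by
    rw [Ideal.span_singleton_le_iff_mem]; exact_mod_cast hqQ
  have hqb : Ideal.span {((q : ℤ) : R)} ≠ ⊥ := by
    rw [Ne, Ideal.span_singleton_eq_bot]; exact_mod_cast hq.ne_zero
  have hdv := Ideal.absNorm_dvd_absNorm_of_le hle
  rw [D.nrm, Int.natAbs_natCast, Nat.dvd_prime_pow hq] at hdv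
  obtain ⟨k, hk, hkk⟩ := hdv
  have hq0 : (q : ℤ) ≠ 0 := by exact_mod_cast hq.ne_zero
  interval_cases k
  · simp at hkk; exact absurd hkk hQ.ne_top
  · rw [pow_one] at hkk
    by_cases hs : Q = Q.map D.s
    · right; right
      have haQ : D.a ∈ Q := by
        have hcard : Nat.card (R ⧸ Q) = q := by
          rw [← hkk, Ideal.absNorm_apply, Submodule.cardQuot_apply]
        have := Fact.mk hq
        have hone : (1 : R ⧸ Q) ≠ 0 := one_ne_zero
        have := mem_zmultiples_of_prime_card hcard hone (g' := Ideal.Quotient.mk Q D.w)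
        obtain ⟨n, hn⟩ := AddSubgroup.mem_zmultiples_iff.mp this
        have h1 : D.w - n ∈ Q := by
          rw [← Ideal.Quotient.eq, ← hn]; simp
        have h2 := D.mem_map h1
        rw [← hs, map_sub, map_intCast] at h2
        have := sub_mem h1 h2
        rw [← D.hw]
        convert this using 1; ring
      have hdQ : ((∏ i, p i : ℤ) : R) ∈ Q := by
        rw [← D.ha]; exact Ideal.mul_mem_left _ _ haQ
      rw [Int.cast_prod, hQ.prod_mem_iff] at hdQ
      obtain ⟨i, -, hi⟩ := hdQ
      refine ⟨i, ?_⟩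
      have hPQ : D.P i ≤ Q := by
        rw [P, Ideal.span_le]
        rintro x (rfl | rfl) <;> assumption
      refine (norm_ext (D.P_ne i) hPQ ?_).symm
      have := Ideal.absNorm_dvd_absNorm_of_le hPQ
      rw [D.P_norm] at this ⊢
      rcases (Nat.dvd_prime (Int.prime_iff_natAbs_prime.mp (D.hp i))).mp this with h | h
      · exact absurd h hN1
      · exact h.symm
    · left
      refine ⟨hs, q, hq0, ?_⟩
      have : (Q.map D.s).IsPrime := Ideal.map_isPrime_of_equiv D.s
      have h0' : Q.map D.s ≠ ⊥ := by
        intro h; apply h0; rw [← D.map_map Q, h, Ideal.map_bot]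
      have hm1 := hQ.isMaximal h0
      have hm2 := Ideal.IsPrime.isMaximal this h0'
      have hc : IsCoprime Q (Q.map D.s) := Ideal.isCoprime_of_isMaximal hs
      refine (norm_ext hqb ?_ ?_).symm
      · rw [Ideal.mul_eq_inf_of_isCoprime hc, Ideal.span_singleton_le_iff_mem]
        refine ⟨by exact_mod_cast hqQ, ?_⟩
        have := D.mem_map hqQ
        simpa using this
      · rw [D.nrm, map_mul, norm_map, hkk, Int.natAbs_natCast, sq]
  · right; left
    exact ⟨q, hq0, (norm_ext hqb hle (by rw [D.nrm, hkk, Int.natAbs_natCast])).symm⟩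

lemma map_ne {I : Ideal R} (h : I ≠ ⊥) : I.map D.s ≠ ⊥ := by
  intro h'; apply h; rw [← D.map_map I, h', Ideal.map_bot]

lemma norm_principal (I : Ideal R) : I ≠ ⊥ →
    ∃ n : ℤ, n ≠ 0 ∧ I * I.map D.s = Ideal.span {(n : R)} := by
  induction I using UniqueFactorizationMonoid.induction_on_prime with
  | h₁ => intro h; exact absurd rfl h
  | h₂ x hx =>
    intro _
    rw [Ideal.isUnit_iff] at hx
    subst hx
    exact ⟨1, one_ne_zero, by simp [Ideal.map_top]⟩
  | h₃ I Q hI hQ ih =>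
    intro _
    obtain ⟨n, hn, hnn⟩ := ih hI
    have hQp : Q.IsPrime := Ideal.isPrime_of_prime hQ
    obtain ⟨m, hm, hmm⟩ : ∃ n : ℤ, n ≠ 0 ∧ Q * Q.map D.s = Ideal.span {(n : R)} := by
      rcases D.prime_cases Q hQ.ne_zero with ⟨-, h⟩ | ⟨q, hq, h⟩ | ⟨i, h⟩
      · exact h
      · refine ⟨q * q, mul_ne_zero hq hq, ?_⟩
        rw [h, Ideal.map_span, Set.image_singleton, map_intCast, Ideal.span_singleton_mul_span_singleton]
        push_cast; rfl
      · exact ⟨p i, (D.hp i).ne_zero, by rw [h, P_map, P_sq]⟩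
    refine ⟨m * n, mul_ne_zero hm hn, ?_⟩
    rw [Ideal.map_mul, mul_mul_mul_comm, hmm, hnn, Ideal.span_singleton_mul_span_singleton]
    push_cast; rfl

/-- ideal class -/
noncomputable def cl (I : Ideal R) (h : I ≠ ⊥) : ClassGroup R :=
  ClassGroup.mk0 ⟨I, mem_nonZeroDivisors_of_ne_zero h⟩

lemma cl_mul {I J : Ideal R} (hI : I ≠ ⊥) (hJ : J ≠ ⊥) (h : I * J ≠ ⊥) :
    cl (I * J) h = cl I hI * cl J hJ := by
  rw [cl, cl, cl, ← map_mul]; rfl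

lemma cl_eq_one {I : Ideal R} (hI : I ≠ ⊥) : cl I hI = 1 ↔ ∃ x, I = Ideal.span {x} := by
  rw [cl, ClassGroup.mk0_eq_one_iff, Submodule.isPrincipal_iff]

lemma inv_mem (H : Subgroup (ClassGroup R)) (hH : ∀ i, cl (D.P i) (D.P_ne i) ∈ H) :
    ∀ (n : ℕ) (I : Ideal R) (hI : I ≠ ⊥), Ideal.absNorm I = n → I.map D.s = I → cl I hI ∈ H := by
  intro n
  induction n using Nat.strong_induction_on with
  | _ n ih =>
  intro I hI hn hs
  by_cases ht : I = ⊤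
  · have : cl I hI = 1 := (cl_eq_one hI).mpr ⟨1, by simp [ht]⟩
    rw [this]; exact one_mem H
  -- the reduction
  have key : ∀ A : Ideal R, A ∣ I → A ≠ ⊤ → A.map D.s = A → (∀ hA, cl A hA ∈ H) →
      cl I hI ∈ H := by
    rintro A ⟨J, rfl⟩ hA1 hAs hAH
    have hA0 : A ≠ ⊥ := by rintro rfl; simp at hI
    have hJ0 : J ≠ ⊥ := by rintro rfl; simp at hI
    rw [cl_mul hA0 hJ0]
    refine mul_mem (hAH _) (ih (Ideal.absNorm J) ?_ J hJ0 rfl ?_)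
    · rw [← hn, map_mul]
      have h1 : Ideal.absNorm A ≠ 1 := by rwa [Ne, Ideal.absNorm_eq_one_iff]
      have h2 : Ideal.absNorm A ≠ 0 := by rwa [Ne, Ideal.absNorm_eq_zero_iff]
      have h3 : Ideal.absNorm J ≠ 0 := by rwa [Ne, Ideal.absNorm_eq_zero_iff]
      have : 2 ≤ Ideal.absNorm A := by omega
      nlinarith [Nat.pos_of_ne_zero h3]
    · rw [Ideal.map_mul, hAs] at hs
      exact mul_left_cancel₀ hA0 hs
  obtain ⟨Q, hQm, hQI⟩ := Ideal.exists_le_maximal I ht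
  have hQ := hQm.isPrime
  have hQ0 : Q ≠ ⊥ := by rintro rfl; exact hI (le_bot_iff.mp hQI)
  rcases D.prime_cases Q hQ0 with ⟨hne, q, hq, h⟩ | ⟨q, hq, h⟩ | ⟨i, h⟩
  · refine key (Q * Q.map D.s) ?_ ?_ ?_ ?_
    · have h2 : (Q.map D.s).IsMaximal := by
        have : (Q.map D.s).IsPrime := Ideal.map_isPrime_of_equiv D.s
        exact this.isMaximal (D.map_ne hQ0)
      rw [Ideal.dvd_iff_le, Ideal.mul_eq_inf_of_isCoprime (Ideal.isCoprime_of_isMaximal hne)]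
      refine le_inf hQI ?_
      conv_lhs => rw [← hs]
      exact Ideal.map_mono hQI
    · intro h; exact hQ.ne_top (eq_top_iff.mpr (h ▸ Ideal.mul_le_left))
    · rw [Ideal.map_mul, D.map_map, mul_comm]
    · intro hA
      rw [(cl_eq_one hA).mpr ⟨_, h⟩]; exact one_mem H
  · refine key Q (Ideal.dvd_iff_le.mpr hQI) hQ.ne_top ?_ ?_
    · rw [h, Ideal.map_span, Set.image_singleton, map_intCast]
    · intro hA
      rw [(cl_eq_one hA).mpr ⟨_, h⟩]; exact one_mem H
  · subst h
    exact key _ (Ideal.dvd_iff_le.mpr hQI) hQ.ne_top (D.P_map i) (fun _ => hH i)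

lemma two_mem (H : Subgroup (ClassGroup R)) (hH : ∀ i, cl (D.P i) (D.P_ne i) ∈ H)
    (c : ClassGroup R) (hc : c * c = 1) : c ∈ H := by
  obtain ⟨⟨I, hI'⟩, rfl⟩ := ClassGroup.mk0_surjective c
  have hI : I ≠ ⊥ := nonZeroDivisors.ne_zero hI'
  change cl I hI ∈ H
  change cl I hI * cl I hI = 1 at hc
  obtain ⟨n, hn, hnn⟩ := D.norm_principal I hI
  have hIs := D.map_ne hI
  have h1 : cl I hI * cl (I.map D.s) hIs = 1 := by
    rw [← cl_mul hI hIs (mul_ne_zero hI hIs)]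
    exact (cl_eq_one _).mpr ⟨_, hnn⟩
  have h2 : cl I hI = cl (I.map D.s) hIs := mul_left_cancel (hc.trans h1.symm)
  obtain ⟨x, y, hx, hy, hxy⟩ := ClassGroup.mk0_eq_mk0_iff.mp h2
  obtain ⟨nx, hnx⟩ := D.pos x
  obtain ⟨ny, hny⟩ := D.pos y
  have hxy' : x * D.s x = y * D.s y := by
    have e1 : Ideal.span {x * D.s x} = Ideal.span {y * D.s y} := by
      have e2 := congrArg (Ideal.map D.s) hxy
      rw [Ideal.map_mul, Ideal.map_mul, D.map_map, Ideal.map_span, Ideal.map_span,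
        Set.image_singleton, Set.image_singleton] at e2
      have e3 := congrArg₂ (· * ·) hxy e2
      rw [mul_mul_mul_comm, mul_mul_mul_comm (Ideal.span {y}), mul_comm (I.map D.s) I,
        Ideal.span_singleton_mul_span_singleton, Ideal.span_singleton_mul_span_singleton] at e3
      exact mul_right_cancel₀ (mul_ne_zero hI hIs) e3
    have e4 := congrArg Ideal.absNorm e1
    rw [hnx, hny] at e4
    have e5 := D.nrm nx
    have e6 := D.nrm ny
    rw [Int.natAbs_natCast, Int.cast_natCast] at e5 e6
    rw [e5, e6] at e4
    have := Nat.pow_left_injective (n := 2) (by norm_num) e4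
    rw [hnx, hny, this]
  by_cases h0 : x + y = 0
  · obtain rfl : y = -x := by linear_combination h0
    rw [Ideal.span_singleton_neg] at hxy
    have : I = I.map D.s := mul_left_cancel₀ (by simpa using hx) hxy
    exact D.inv_mem H hH _ I hI rfl this.symm
  · set w := D.s y * (x + y) with hw
    have hsy : D.s y ≠ 0 := by simpa using hy
    have hw0 : w ≠ 0 := mul_ne_zero hsy h0
    have hwb : Ideal.span {w} ≠ ⊥ := by simpa using hw0
    have hcl : cl (Ideal.span {w} * I) (mul_ne_zero hwb hI) = cl I hI := by
      rw [cl_mul hwb hI, (cl_eq_one hwb).mpr ⟨w, rfl⟩, one_mul]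
    rw [← hcl]
    refine D.inv_mem H hH _ _ _ rfl ?_
    rw [Ideal.map_mul, Ideal.map_span, Set.image_singleton]
    have : D.s w = (D.s x + D.s y) * y := by
      rw [hw, map_mul, D.ss, map_add, mul_comm]
    rw [this, ← Ideal.span_singleton_mul_span_singleton, mul_assoc, ← hxy, ← mul_assoc,
      Ideal.span_singleton_mul_span_singleton]
    congr 3
    rw [hw]; linear_combination hxy'

lemma map_prod (S : Finset (Fin r)) : (∏ i ∈ S, D.P i).map D.s = ∏ i ∈ S, D.P i := by
  induction S using Finset.induction_on with
  | empty => simp [Ideal.map_top]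
  | insert i S hi ih => rw [Finset.prod_insert hi, Ideal.map_mul, ih, P_map]

lemma prod_sq (S : Finset (Fin r)) :
    (∏ i ∈ S, D.P i) * (∏ i ∈ S, D.P i) = Ideal.span {((∏ i ∈ S, p i : ℤ) : R)} := by
  rw [← Finset.prod_mul_distrib, Finset.prod_congr rfl (fun i _ => D.P_sq i),
    Ideal.prod_span_singleton]
  push_cast; rfl

lemma prod_univ : ∏ i, D.P i = Ideal.span {D.a} := by
  have h := D.prod_sq Finset.univ
  rw [← D.ha, ← Ideal.span_singleton_mul_span_singleton, ← sq, ← sq] at h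
  exact pow_left_injective (M := Ideal R) two_ne_zero h

lemma dvd_of_mem {n : ℤ} {i : Fin r} (h : (n : R) ∈ D.P i) : p i ∣ n := by
  have : ((n * n : ℤ) : R) ∈ D.P i * D.P i := by
    push_cast; exact Ideal.mul_mem_mul h h
  rw [P_sq, Ideal.mem_span_singleton] at this
  rcases (D.hp i).dvd_or_dvd (D.dvd_int this) with h | h <;> exact h

lemma prod_dvd (D : GD R r p) (S : Finset (Fin r)) (n : ℤ) (h : ∀ i ∈ S, p i ∣ n) :
    ∏ i ∈ S, p i ∣ n := by
  refine Finset.prod_dvd_of_coprime ?_ h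
  intro i _ j _ hij
  change IsCoprime (p i) (p j)
  rw [(D.hp i).coprime_iff_not_dvd]
  intro hd
  have h1 : p j ∣ ∏ k ∈ Finset.univ.erase i, p k := Finset.dvd_prod_of_mem _ (by simp [hij.symm])
  have h2 : p i * p i ∣ ∏ k, p k := by
    rw [← Finset.mul_prod_erase _ _ (Finset.mem_univ i)]
    exact mul_dvd_mul_left _ (hd.trans h1)
  exact (D.hp i).not_isUnit (D.hsf _ h2)

lemma relation (S : Finset (Fin r)) (z : R) (h : ∏ i ∈ S, D.P i = Ideal.span {z}) :
    S = ∅ ∨ S = Finset.univ := by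
  have hzP : ∀ i ∈ S, z ∈ D.P i := by
    intro i hi
    have : z ∈ ∏ i ∈ S, D.P i := by rw [h]; exact Ideal.mem_span_singleton_self z
    exact (Ideal.prod_le_inf.trans (Finset.inf_le hi)) this
  have haP : ∀ i, D.a ∈ D.P i := fun i => Ideal.subset_span (by simp)
  have hsP : ∀ i x, x ∈ D.P i → D.s x ∈ D.P i := fun i x hx => by
    have := D.mem_map hx; rwa [P_map] at this
  obtain ⟨A, hA⟩ := D.fix (z + D.s z) (by rw [map_add, D.ss, add_comm])
  obtain ⟨C, hC⟩ := D.fix (D.a * z + D.s (D.a * z)) (by rw [map_add, D.ss, add_comm])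
  have hAd : ∏ i ∈ S, p i ∣ A := D.prod_dvd S A fun i hi => D.dvd_of_mem (by
    rw [← hA]; exact add_mem (hzP i hi) (hsP i _ (hzP i hi)))
  have hCd : ∏ i, p i ∣ C := D.prod_dvd _ C fun i _ => D.dvd_of_mem (by
    rw [← hC]; exact add_mem (Ideal.mul_mem_right _ _ (haP i))
      (hsP i _ (Ideal.mul_mem_right _ _ (haP i))))
  obtain ⟨N, hN⟩ := D.pos z
  set n := ∏ i ∈ S, p i with hn
  set m := ∏ i ∈ Sᶜ, p i with hm
  have hnm : ∏ i, p i = n * m := (Finset.prod_mul_prod_compl S p).symm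
  have hNn : N = n.natAbs := by
    have e := D.prod_sq S
    nth_rw 2 [← D.map_prod S] at e
    rw [h, Ideal.map_span, Set.image_singleton, Ideal.span_singleton_mul_span_singleton, hN] at e
    have e4 := congrArg Ideal.absNorm e
    have e5 := D.nrm N
    rw [Int.natAbs_natCast, Int.cast_natCast] at e5
    rw [e5, D.nrm] at e4
    exact Nat.pow_left_injective (n := 2) (by norm_num) e4
  obtain ⟨A', rfl⟩ := hAd
  obtain ⟨B, rfl⟩ := hCd
  have hneg := D.hneg
  have h4 := D.h4
  have ha := D.ha
  rw [hnm] at hneg h4 ha hC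
  have hn0 : n ≠ 0 := by rintro h; simp [h] at hneg
  have hm0 : m ≠ 0 := by rintro h; simp [h] at hneg
  have heq : 4 * (n * m) * N = n * m * (n * A') ^ 2 - (n * m * B) ^ 2 := by
    have : ((4 * (n * m) * N : ℤ) : R) = ((n * m * (n * A') ^ 2 - (n * m * B) ^ 2 : ℤ) : R) := by
      have e1 : ((4 * (n * m) * N : ℤ) : R) = 4 * ((n * m : ℤ) : R) * (z * D.s z) := by
        rw [hN]; push_cast; ring
      have e2 : ((n * m * (n * A') ^ 2 - (n * m * B) ^ 2 : ℤ) : R) =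
          ((n * m : ℤ) : R) * ((n * A' : ℤ) : R) ^ 2 - ((n * m * B : ℤ) : R) ^ 2 := by
        push_cast; ring
      rw [e1, e2, ← hA, ← hC, ← ha, map_mul, D.sa]
      ring
    exact_mod_cast this
  have habs : |n| * |m| = -(n * m) := by rw [← abs_mul, abs_of_neg hneg]
  have hNa : (N : ℤ) = |n| := by rw [hNn, Int.natCast_natAbs]
  have heq2 : 4 = |n| * A' ^ 2 + |m| * B ^ 2 := by
    rw [hNa] at heq
    have hk : n * m * |n| ≠ 0 := by simp [hn0, hm0]
    apply mul_left_cancel₀ hk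
    have hnn : n ^ 2 = |n| ^ 2 := (sq_abs n).symm
    have hmm : m ^ 2 = |m| ^ 2 := (sq_abs m).symm
    linear_combination heq + n * m * A' ^ 2 * hnn - n * m * B ^ 2 * habs
  have hn1 : 0 < |n| := abs_pos.mpr hn0
  have hm1 : 0 < |m| := abs_pos.mpr hm0
  have hodd : Odd (n * m) := by
    rw [Int.odd_iff]; omega
  rw [Int.odd_mul, ← odd_abs, ← odd_abs (a := m)] at hodd
  have hor : |n| = 1 ∨ |m| = 1 := by
    by_contra! hcon
    obtain ⟨⟨u, hu⟩, ⟨v, hv⟩⟩ := hodd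
    have hn3 : 3 ≤ |n| := by omega
    have hm3 : 3 ≤ |m| := by omega
    have hA1 : A' ^ 2 < 2 ^ 2 := by nlinarith [sq_nonneg A', sq_nonneg B]
    have hB1 : B ^ 2 < 2 ^ 2 := by nlinarith [sq_nonneg A', sq_nonneg B]
    have hA2 := abs_lt_of_sq_lt_sq' hA1 (by norm_num)
    have hB2 := abs_lt_of_sq_lt_sq' hB1 (by norm_num)
    obtain ⟨ha1, ha2⟩ := hA2
    obtain ⟨hb1, hb2⟩ := hB2
    generalize |n| = X at *
    generalize |m| = Y at *
    interval_cases A' <;> interval_cases B <;> omega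
  have aux : ∀ T : Finset (Fin r), |∏ i ∈ T, p i| = 1 → T = ∅ := by
    intro T hT
    by_contra hne
    obtain ⟨i, hi⟩ := Finset.nonempty_iff_ne_empty.mpr hne
    have := Finset.dvd_prod_of_mem p hi
    exact (D.hp i).not_isUnit (isUnit_of_dvd_unit this (Int.isUnit_iff_abs_eq.mpr hT))
  rcases hor with h | h
  · left; exact aux S h
  · right; simpa using aux _ h
end
end GD

lemma g2_equiv {G : Type*} [Group G] [Finite G] (h : ∀ x : G, x * x = 1) (n : ℕ)
    (hc : Nat.card G = 2 ^ n) : Nonempty (G ≃* (Fin n → Multiplicative (ZMod 2))) := by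
  let _ : CommGroup G := { ‹Group G› with
    mul_comm := fun a b => by
      have h1 := h (a * b)
      have ha := mul_eq_one_iff_eq_inv.mp (h a)
      have hb := mul_eq_one_iff_eq_inv.mp (h b)
      have := mul_eq_one_iff_eq_inv.mp h1
      rw [mul_inv_rev, ← ha, ← hb] at this
      exact this }
  let _ : Module (ZMod 2) (Additive G) := AddCommGroup.zmodModule (n := 2) (fun x => by
    rw [two_nsmul]; exact h x.toMul)
  have : Module.Finite (ZMod 2) (Additive G) := Module.Finite.of_finite
  have hf : Module.finrank (ZMod 2) (Additive G) = n := by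
    have h1 := Module.natCard_eq_pow_finrank (K := ZMod 2) (V := Additive G)
    rw [Nat.card_congr Additive.toMul, hc, Nat.card_zmod] at h1
    exact (Nat.pow_right_injective le_rfl h1).symm
  let e := (Module.finBasisOfFinrankEq (ZMod 2) (Additive G) hf).equivFun
  exact ⟨{ toFun := fun g i => Multiplicative.ofAdd (e (Additive.ofMul g) i)
           invFun := fun v => (e.symm (fun i => (v i).toAdd)).toMul
           left_inv := fun g => by simp
           right_inv := fun v => by
             funext i
             simp
           map_mul' := fun a b => by
             funext i
             simp }⟩

lemma lin_lemma {V : Type*} [AddCommGroup V] [Module (ZMod 2) V] [Module.Finite (ZMod 2) V]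
    {r : ℕ} (hr : 0 < r) (c : Fin r → V) (hspan : Submodule.span (ZMod 2) (Set.range c) = ⊤)
    (h : ∀ S : Finset (Fin r), ∑ i ∈ S, c i = 0 → S = ∅ ∨ S = Finset.univ)
    (h' : ∑ i, c i = 0) : Module.finrank (ZMod 2) V = r - 1 := by
  let f := Fintype.linearCombination (ZMod 2) c
  have hz : ∀ x : ZMod 2, x = 0 ∨ x = 1 := by decide
  have hrange : LinearMap.range f = ⊤ := by
    rw [← hspan]; exact Fintype.range_linearCombination (ZMod 2) c
  have hker : LinearMap.ker f = Submodule.span (ZMod 2) {(fun _ => 1 : Fin r → ZMod 2)} := by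
    apply le_antisymm
    · intro v hv
      rw [LinearMap.mem_ker] at hv
      have hv' : ∑ i ∈ Finset.univ.filter (fun i => v i = 1), c i = 0 := by
        rw [← hv, Fintype.linearCombination_apply, Finset.sum_filter]
        refine Finset.sum_congr rfl fun i _ => ?_
        rcases hz (v i) with h | h <;> simp [h]
      rcases h _ hv' with hS | hS
      · have : v = 0 := by
          funext i
          rcases hz (v i) with h | h
          · exact h
          · have : i ∈ Finset.univ.filter (fun i => v i = 1) := by simp [h]
            rw [hS] at this; simp at this
        rw [this]; exact zero_mem _
      · have : v = fun _ => 1 := by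
          funext i
          have : i ∈ Finset.univ.filter (fun i => v i = 1) := by rw [hS]; simp
          simpa using this
        rw [this]; exact Submodule.mem_span_singleton_self _
    · rw [Submodule.span_singleton_le_iff_mem, LinearMap.mem_ker, Fintype.linearCombination_apply]
      simpa using h'
  have h1 : Module.finrank (ZMod 2) (LinearMap.ker f) = 1 := by
    rw [hker]
    apply finrank_span_singleton
    intro h0
    have := congrFun h0 ⟨0, hr⟩
    simp at this
  have h2 := LinearMap.finrank_range_add_finrank_ker f
  rw [h1, hrange, finrank_top, Module.finrank_fin_fun] at h2
  omega

lemma lin_dual {V : Type*} [AddCommGroup V] [Module (ZMod 2) V] [Module.Finite (ZMod 2) V]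
    {r : ℕ} (hr : 0 < r) (c : Fin r → Module.Dual (ZMod 2) V)
    (hinj : ∀ g, (∀ i, c i g = 0) → g = 0)
    (h : ∀ S : Finset (Fin r), ∑ i ∈ S, c i = 0 → S = ∅ ∨ S = Finset.univ)
    (h' : ∑ i, c i = 0) : Module.finrank (ZMod 2) V = r - 1 := by
  rw [← Subspace.dual_finrank_eq]
  refine lin_lemma hr c ?_ h h'
  apply Submodule.eq_top_of_finrank_eq
  have h1 := Subspace.finrank_add_finrank_dualCoannihilator_eq
    (Submodule.span (ZMod 2) (Set.range c))
  have h2 : (Submodule.span (ZMod 2) (Set.range c)).dualCoannihilator = ⊥ := by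
    rw [eq_bot_iff]
    intro g hg
    rw [Submodule.mem_dualCoannihilator] at hg
    rw [Submodule.mem_bot]
    exact hinj g fun i => hg _ (Submodule.subset_span ⟨i, rfl⟩)
  rw [h2, finrank_bot, add_zero] at h1
  rw [h1, Subspace.dual_finrank_eq]

lemma GD.card_ker {R : Type*} [CommRing R] [IsDedekindDomain R] [Module.Free ℤ R]
    [Module.Finite ℤ R] [CharZero R] [Finite (ClassGroup R)] {r : ℕ} {p : Fin r → ℤ}
    (D : GD R r p) (hr : 0 < r) :
    Nat.card (powMonoidHom 2 : ClassGroup R →* ClassGroup R).ker = 2 ^ (r - 1) := by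
  set T := (powMonoidHom 2 : ClassGroup R →* ClassGroup R).ker with hT
  have hTT : ∀ x : T, x * x = 1 := fun ⟨x, hx⟩ => by
    rw [hT, MonoidHom.mem_ker, powMonoidHom_apply, sq] at hx
    exact Subtype.ext hx
  let _ : Module (ZMod 2) (Additive T) := AddCommGroup.zmodModule (n := 2) (fun x => by
    rw [two_nsmul]; exact hTT x.toMul)
  have : Module.Finite (ZMod 2) (Additive T) := Module.Finite.of_finite
  have hcT : ∀ i, GD.cl (D.P i) (D.P_ne i) ∈ T := by
    intro i
    rw [hT, MonoidHom.mem_ker, powMonoidHom_apply, sq,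
      ← GD.cl_mul _ _ (mul_ne_zero (D.P_ne i) (D.P_ne i)), GD.cl_eq_one]
    exact ⟨_, D.P_sq i⟩
  let c : Fin r → Additive T := fun i => Additive.ofMul ⟨_, hcT i⟩
  have hne : ∀ S : Finset (Fin r), ∏ i ∈ S, D.P i ≠ ⊥ := fun S =>
    Finset.prod_ne_zero_iff.mpr fun i _ => D.P_ne i
  have hsum : ∀ S : Finset (Fin r), (((∑ i ∈ S, c i).toMul : T) : ClassGroup R) =
      GD.cl (∏ i ∈ S, D.P i) (hne S) := by
    intro S
    induction S using Finset.induction_on with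
    | empty =>
      symm
      rw [Finset.sum_empty]
      exact (GD.cl_eq_one _).mpr ⟨1, by simp⟩
    | insert i S hi ih =>
      rw [Finset.sum_insert hi, toMul_add, Subgroup.coe_mul, ih]
      simp only [Finset.prod_insert hi]
      rw [GD.cl_mul (D.P_ne i) (hne S)]
      rfl
  have hsum0 : ∀ S : Finset (Fin r), ∑ i ∈ S, c i = 0 ↔ ∃ z, ∏ i ∈ S, D.P i = Ideal.span {z} := by
    intro S
    rw [← GD.cl_eq_one (hne S), ← hsum S, ← toMul_eq_one, OneMemClass.coe_eq_one]
  have hfin : Module.finrank (ZMod 2) (Additive T) = r - 1 := by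
    refine lin_lemma hr c ?_ ?_ ?_
    · rw [eq_top_iff]
      rintro x -
      let W : Submodule (ZMod 2) (Additive T) := Submodule.span (ZMod 2) (Set.range c)
      let H : Subgroup (ClassGroup R) := (AddSubgroup.toSubgroup' (G := T) W.toAddSubgroup).map T.subtype
      have hcW : ∀ i, c i ∈ W := fun i => Submodule.subset_span ⟨i, rfl⟩
      have := D.two_mem H (fun i => ⟨⟨_, hcT i⟩, hcW i, rfl⟩)
        (x.toMul : T) (congrArg Subtype.val (hTT x.toMul))
      obtain ⟨y, hy, hyx⟩ := this
      have : y = x.toMul := Subtype.ext hyx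
      subst this
      exact hy
    · intro S hS
      obtain ⟨z, hz⟩ := (hsum0 S).mp hS
      exact D.relation S z hz
    · exact (hsum0 _).mpr ⟨_, D.prod_univ⟩
  have h1 := Module.natCard_eq_pow_finrank (K := ZMod 2) (V := Additive T)
  rw [hfin, Nat.card_zmod] at h1
  exact h1

lemma card_quot {C : Type*} [CommGroup C] [Finite C] :
    Nat.card (C ⧸ (powMonoidHom 2 : C →* C).range) = Nat.card (powMonoidHom 2 : C →* C).ker := by
  have h1 := Subgroup.card_eq_card_quotient_mul_card_subgroup (powMonoidHom 2 : C →* C).range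
  have h2 := Subgroup.card_eq_card_quotient_mul_card_subgroup (powMonoidHom 2 : C →* C).ker
  rw [Nat.card_congr (QuotientGroup.quotientKerEquivRange (powMonoidHom 2 : C →* C)).toEquiv] at h2
  rw [h1, mul_comm] at h2
  exact Nat.eq_of_mul_eq_mul_left Nat.card_pos h2

lemma sq_empty {r : ℕ} {p : Fin r → ℤ} (hp : ∀ i, Prime (p i)) (hsf : Squarefree (∏ i, p i))
    (T : Finset (Fin r)) (a : ℚ) (h : a ^ 2 = ((∏ i ∈ T, p i : ℤ) : ℚ)) : T = ∅ := by
  have h1 : IsSquare (∏ i ∈ T, p i) := by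
    rw [← Rat.isSquare_intCast_iff]; exact ⟨a, by rw [← h, sq]⟩
  obtain ⟨k, hk⟩ := h1
  have hd : ∏ i ∈ T, p i ∣ ∏ i, p i := Finset.prod_dvd_prod_of_subset _ _ _ (Finset.subset_univ T)
  have hu : IsUnit k := hsf k (hk ▸ hd)
  by_contra hne
  obtain ⟨i, hi⟩ := Finset.nonempty_iff_ne_empty.mpr hne
  have := Finset.dvd_prod_of_mem p hi
  rw [hk] at this
  exact (hp i).not_isUnit (isUnit_of_dvd_unit this (hu.mul hu))

lemma alpha_indep {F : Type} [Field F] [NumberField F] {d : ℤ} (hneg : d < 0)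
    {α : F} (hα : α ^ 2 = (d : F)) (a b : ℚ) (h : (a : F) + b * α = 0) : a = 0 ∧ b = 0 := by
  have hb : b = 0 := by
    by_contra hb
    have hbF : (b : F) ≠ 0 := by exact_mod_cast hb
    have h1 : ((a ^ 2 : ℚ) : F) = ((b ^ 2 * d : ℚ) : F) := by
      push_cast
      rw [← hα]
      linear_combination (a - b * α) * h
    have h2 : a ^ 2 = b ^ 2 * d := by exact_mod_cast h1
    have h3 : (d : ℚ) < 0 := by exact_mod_cast hneg
    have h4 : 0 < b ^ 2 := by positivity
    nlinarith [sq_nonneg a]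
  subst hb
  simpa using h

lemma coords {F : Type} [Field F] [NumberField F] {d : ℤ} (hneg : d < 0)
    (hdim : Module.finrank ℚ F = 2) {α : F} (hα : α ^ 2 = (d : F)) (x : F) :
    ∃ a b : ℚ, x = a + b * α := by
  have hli : LinearIndependent ℚ ![(1 : F), α] := by
    rw [LinearIndependent.pair_iff]
    intro s t hst
    apply alpha_indep hneg hα
    rw [← hst, Rat.smul_def, Rat.smul_def, mul_one]
  have := hli.span_eq_top_of_card_eq_finrank (by simp [hdim])
  have hx : x ∈ Submodule.span ℚ (Set.range ![(1 : F), α]) := by rw [this]; trivial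
  rw [Matrix.range_cons, Matrix.range_cons, Matrix.range_empty, Set.union_empty,
    Set.singleton_union, Submodule.mem_span_pair] at hx
  obtain ⟨a, b, hab⟩ := hx
  exact ⟨a, b, by rw [← hab, Rat.smul_def, Rat.smul_def, mul_one]⟩

lemma sq_in_F {F : Type} [Field F] [NumberField F] {r : ℕ} {p : Fin r → ℤ}
    (hp : ∀ i, Prime (p i)) {d : ℤ} (hd : d = ∏ i, p i) (hneg : d < 0) (hsf : Squarefree d)
    (hdim : Module.finrank ℚ F = 2) {α : F} (hα : α ^ 2 = (d : F))
    (S : Finset (Fin r)) (x : F) (hx : x ^ 2 = ((∏ i ∈ S, p i : ℤ) : F)) :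
    S = ∅ ∨ S = Finset.univ := by
  obtain ⟨a, b, rfl⟩ := coords hneg hdim hα x
  have h1 := alpha_indep hneg hα (a ^ 2 + d * b ^ 2 - ((∏ i ∈ S, p i : ℤ) : ℚ)) (2 * a * b) (by
    rw [Rat.cast_sub, Rat.cast_intCast, ← hx]
    push_cast
    rw [← hα]; ring)
  obtain ⟨h1, h2⟩ := h1
  rw [hd] at hsf
  rcases mul_eq_zero.mp h2 with h3 | h3
  · right
    have ha : a = 0 := by linarith
    subst ha
    have hnm : ∏ i, p i = (∏ i ∈ S, p i) * (∏ i ∈ Sᶜ, p i) := (Finset.prod_mul_prod_compl S p).symm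
    rw [hd, hnm] at h1
    have hn : ((∏ i ∈ S, p i : ℤ) : ℚ) ≠ 0 := by
      have := Finset.prod_ne_zero_iff.mpr fun i (_ : i ∈ S) => (hp i).ne_zero
      exact_mod_cast this
    have h5 : ((∏ i ∈ Sᶜ, p i : ℤ) : ℚ) * b ^ 2 = 1 := by
      apply mul_left_cancel₀ hn
      rw [Int.cast_mul] at h1
      linear_combination h1
    have hb : b ≠ 0 := by rintro rfl; simp at h5
    have h6 : (b⁻¹) ^ 2 = ((∏ i ∈ Sᶜ, p i : ℤ) : ℚ) := by
      rw [inv_pow]; exact (eq_inv_of_mul_eq_one_left h5).symm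
    simpa using sq_empty hp hsf _ _ h6
  · left
    subst h3
    exact sq_empty hp hsf S a (by linear_combination h1)

lemma exists_conj {F : Type} [Field F] [NumberField F] {d : ℤ} (hneg : d < 0)
    (hdim : Module.finrank ℚ F = 2) {α : F} (hα : α ^ 2 = (d : F)) :
    ∃ σ : F ≃ₐ[ℚ] F, σ α = -α := by
  have : Algebra.IsQuadraticExtension ℚ F := { finrank_eq_two' := hdim }
  have hg : IsGalois ℚ F := inferInstance
  have hn : α ∉ (⊥ : IntermediateField ℚ F) := by
    intro h
    obtain ⟨q, hq⟩ := IntermediateField.mem_bot.mp h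
    have := alpha_indep hneg hα q (-1) (by rw [← hq]; simp)
    simp at this
  rw [IsGalois.mem_bot_iff_fixed] at hn
  push Not at hn
  obtain ⟨σ, hσ⟩ := hn
  refine ⟨σ, ?_⟩
  have h2 : (σ α) ^ 2 = α ^ 2 := by rw [← map_pow, hα, map_intCast]
  exact (sq_eq_sq_iff_eq_or_eq_neg.mp h2).resolve_left hσ

lemma exists_GD {F : Type} [Field F] [NumberField F] {r : ℕ} {p : Fin r → ℤ}
    (hp : ∀ i, Prime (p i)) {d : ℤ} (hd : d = ∏ i, p i) (hneg : d < 0) (hsf : Squarefree d)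
    (hd4 : d % 4 = 1)
    (hdim : Module.finrank ℚ F = 2) {α : F} (hα : α ^ 2 = (d : F)) :
    Nonempty (GD (𝓞 F) r p) := by
  obtain ⟨σ, hσ⟩ := exists_conj hneg hdim hα
  have hσc : ∀ a b : ℚ, σ (a + b * α) = a - b * α := by
    intro a b
    rw [map_add, map_mul, map_ratCast, map_ratCast, hσ]; ring
  have hσσ : ∀ x, σ (σ x) = x := by
    intro x
    obtain ⟨a, b, rfl⟩ := coords hneg hdim hα x
    rw [hσc, map_sub, map_mul, map_ratCast, map_ratCast, hσ]; ring
  have hint : ∀ (x : 𝓞 F) (q : ℚ), (x : F) = q → ∃ n : ℤ, x = n ∧ q = n := by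
    intro x q hq
    have h1 : IsIntegral ℤ (algebraMap ℚ F q) := by
      rw [eq_ratCast, ← hq]; exact x.isIntegral_coe
    have h2 : IsIntegral ℤ q := (isIntegral_algebraMap_iff (algebraMap ℚ F).injective).mp h1
    obtain ⟨n, hn⟩ := IsIntegrallyClosed.isIntegral_iff.mp h2
    refine ⟨n, ?_, by simpa using hn.symm⟩
    apply RingOfIntegers.coe_injective
    exact hq.trans (by rw [← hn]; simp)
  obtain ⟨k, hk⟩ : ∃ k, d = 1 + 4 * k := ⟨d / 4, by omega⟩
  have hαi : IsIntegral ℤ α := by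
    refine IsIntegral.of_pow (n := 2) (by norm_num) ?_
    rw [hα]; exact isIntegral_intCast d
  have hwi : IsIntegral ℤ ((1 + α) / 2) := by
    refine ⟨Polynomial.X ^ 2 - Polynomial.X - Polynomial.C k, by monicity!, ?_⟩
    simp only [Polynomial.eval₂_sub, Polynomial.eval₂_pow, Polynomial.eval₂_X, Polynomial.eval₂_C]
    rw [eq_intCast]
    have : α ^ 2 = 1 + 4 * (k : F) := by rw [hα, hk]; push_cast; rfl
    field_simp
    linear_combination this
  refine ⟨{ s := RingOfIntegers.mapRingEquiv σ.toRingEquiv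
            a := ⟨α, hαi⟩
            w := ⟨_, hwi⟩
            ss := fun x => RingOfIntegers.coe_injective (hσσ x)
            sa := RingOfIntegers.coe_injective hσ
            ha := RingOfIntegers.coe_injective ?_
            hw := RingOfIntegers.coe_injective ?_
            fix := fun x hx => ?_
            pos := fun x => ?_
            nrm := fun n => ?_
            hp := hp
            hsf := hd ▸ hsf
            hneg := hd ▸ hneg
            h4 := hd ▸ hd4 }⟩
  · rw [← hd]
    change α * α = _
    rw [← sq, hα]; simp
  · change (1 + α) / 2 - σ ((1 + α) / 2) = α
    rw [map_div₀, map_add, hσ, map_one, map_ofNat]; ring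
  · have hx' : σ (x : F) = x := congrArg (fun y : 𝓞 F => (y : F)) hx
    obtain ⟨a, b, hab⟩ := coords hneg hdim hα (x : F)
    rw [hab, hσc] at hx'
    have := (alpha_indep hneg hα 0 (2 * b) (by push_cast; linear_combination -hx')).2
    have hb : b = 0 := by linarith
    obtain ⟨n, hn, -⟩ := hint x a (by rw [hab, hb]; simp)
    exact ⟨n, hn⟩
  · obtain ⟨a, b, hab⟩ := coords hneg hdim hα (x : F)
    obtain ⟨n, hn, hn'⟩ := hint (x * RingOfIntegers.mapRingEquiv σ.toRingEquiv x)
      (a ^ 2 - d * b ^ 2) (by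
        change (x : F) * σ (x : F) = _
        rw [hab, hσc]
        push_cast
        rw [← hα]; ring)
    have h3 : (d : ℚ) < 0 := by exact_mod_cast hneg
    have : (0 : ℚ) ≤ n := by rw [← hn']; nlinarith [sq_nonneg a, sq_nonneg b]
    have hn0 : 0 ≤ n := by exact_mod_cast this
    lift n to ℕ using hn0
    exact ⟨n, by rw [hn]; simp⟩
  · rw [Ideal.absNorm_span_singleton]
    have : ((n : ℤ) : 𝓞 F) = algebraMap ℤ (𝓞 F) n := by simp
    rw [this, Algebra.norm_algebraMap_of_basis (RingOfIntegers.basis F),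
      ← Module.finrank_eq_card_chooseBasisIndex, RingOfIntegers.rank, hdim, Int.natAbs_pow]

lemma galois_part {F Ω : Type} [Field F] [NumberField F] [Field Ω] [Algebra F Ω] {r : ℕ}
    (hr : 0 < r) {p : Fin r → ℤ}
    (hp : ∀ i, Prime (p i)) {d : ℤ} (hd : d = ∏ i, p i) (hneg : d < 0) (hsf : Squarefree d)
    (hdim : Module.finrank ℚ F = 2) {α : F} (hα : α ^ 2 = (d : F))
    (β : Fin r → Ω) (hβ : ∀ i, β i ^ 2 = algebraMap F Ω ((p i : F))) :
    Nonempty (((IntermediateField.adjoin F (Set.range β)) ≃ₐ[F]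
          (IntermediateField.adjoin F (Set.range β))) ≃*
        (Fin (r - 1) → Multiplicative (ZMod 2))) := by
  set K := IntermediateField.adjoin F (Set.range β) with hK
  have hbi : ∀ i, IsIntegral F (β i) := fun i =>
    IsIntegral.of_pow (n := 2) (by norm_num) (by rw [hβ]; exact isIntegral_algebraMap)
  have hfd : FiniteDimensional F K :=
    IntermediateField.finiteDimensional_adjoin (by rintro _ ⟨i, rfl⟩; exact hbi i)
  let b : Fin r → K := fun i => ⟨β i, IntermediateField.subset_adjoin F _ ⟨i, rfl⟩⟩
  have hb : ∀ i, b i ^ 2 = algebraMap F K (p i : F) := fun i => Subtype.ext (hβ i)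
  have hbZ : ∀ i, b i ^ 2 = (p i : K) := fun i => by rw [hb, map_intCast]
  have hcz : CharZero K := charZero_of_injective_algebraMap (algebraMap F K).injective
  have hnorm : Normal F K := by
    rw [normal_iff]
    intro x
    refine ⟨Algebra.IsIntegral.isIntegral x, ?_⟩
    have hmin : minpoly F x = minpoly F (x : Ω) :=
      (minpoly.algebraMap_eq (algebraMap K Ω).injective x).symm
    rw [hmin]
    refine IntermediateField.splits_of_mem_adjoin F Ω (S := Set.range β) ?_ x.2
    rintro _ ⟨i, rfl⟩
    refine ⟨hbi i, ?_⟩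
    have h1 : minpoly F (β i) ∣ Polynomial.X ^ 2 - Polynomial.C (p i : F) :=
      minpoly.dvd _ _ (by simp [hβ])
    have h2 : (Polynomial.X ^ 2 - Polynomial.C (p i : F)).map (algebraMap F K) =
        (Polynomial.X - Polynomial.C (b i)) * (Polynomial.X + Polynomial.C (b i)) := by
      rw [Polynomial.map_sub, Polynomial.map_pow, Polynomial.map_X, Polynomial.map_C, ← hb,
        Polynomial.C_pow]
      ring
    have h3 := Polynomial.map_dvd (algebraMap F K) h1
    refine Polynomial.Splits.of_dvd ?_ ?_ h3
    · rw [h2]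
      exact (Polynomial.Splits.X_sub_C _).mul (Polynomial.Splits.X_add_C _)
    · exact (Polynomial.map_ne_zero (Polynomial.X_pow_sub_C_ne_zero (by norm_num) _))
  have hgal : IsGalois F K := { }
  have hb0 : ∀ i, b i ≠ 0 := by
    intro i h
    have := hbZ i
    rw [h] at this
    have h2 : (p i : K) = 0 := by rw [← this]; simp
    exact (hp i).ne_zero (by exact_mod_cast h2)
  have hgb : ∀ (g : K ≃ₐ[F] K) i, g (b i) = b i ∨ g (b i) = -b i := by
    intro g i
    apply sq_eq_sq_iff_eq_or_eq_neg.mp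
    rw [← map_pow, hbZ, map_intCast]
  have hext : ∀ g : K ≃ₐ[F] K, (∀ i, g (b i) = b i) → g = 1 := by
    intro g hg
    have : (g : K →ₐ[F] K) = AlgHom.id F K := by
      apply IntermediateField.algHom_ext_of_eq_adjoin F (S := K) hK
      rintro _ ⟨i, rfl⟩
      exact hg i
    ext x
    exact congrArg Subtype.val (DFunLike.congr_fun this x)
  have h2 : ∀ g : K ≃ₐ[F] K, g * g = 1 := by
    intro g
    apply hext
    intro i
    rw [AlgEquiv.mul_apply]
    rcases hgb g i with h | h
    · rw [h, h]
    · rw [h, map_neg, h, neg_neg]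
  let _ : CommGroup (K ≃ₐ[F] K) := { (inferInstance : Group (K ≃ₐ[F] K)) with
    mul_comm := fun a b => by
      have h1 := h2 (a * b)
      have ha := mul_eq_one_iff_eq_inv.mp (h2 a)
      have hb := mul_eq_one_iff_eq_inv.mp (h2 b)
      have := mul_eq_one_iff_eq_inv.mp h1
      rw [mul_inv_rev, ← ha, ← hb] at this
      exact this }
  let _ : Module (ZMod 2) (Additive (K ≃ₐ[F] K)) := AddCommGroup.zmodModule (n := 2) (fun x => by
    rw [two_nsmul]; exact h2 x.toMul)
  have : Module.Finite (ZMod 2) (Additive (K ≃ₐ[F] K)) := Module.Finite.of_finite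
  have hbn : ∀ i, -b i ≠ b i := fun i h => hb0 i (neg_eq_self.mp h)
  classical
  let c0 : Fin r → Additive (K ≃ₐ[F] K) →+ ZMod 2 := fun i =>
    AddMonoidHom.mk' (fun g => if g.toMul (b i) = b i then 0 else 1) (by
      intro g h
      rw [toMul_add, AlgEquiv.mul_apply]
      rcases hgb g.toMul i with hg | hg <;> rcases hgb h.toMul i with hh | hh <;>
        simp [hg, hh, hbn, CharTwo.add_self_eq_zero])
  let c : Fin r → Module.Dual (ZMod 2) (Additive (K ≃ₐ[F] K)) := fun i =>
    AddMonoidHom.toZModLinearMap 2 (c0 i)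
  have hc : ∀ i (g : K ≃ₐ[F] K), c i (Additive.ofMul g) = if g (b i) = b i then 0 else 1 :=
    fun _ _ => rfl
  have hcS : ∀ (S : Finset (Fin r)) (g : K ≃ₐ[F] K), g (∏ i ∈ S, b i) =
      (if (∑ i ∈ S, c i) (Additive.ofMul g) = 0 then 1 else -1) * ∏ i ∈ S, b i := by
    intro S g
    have hz : ∀ x : ZMod 2, x = 0 ∨ x = 1 := by decide
    induction S using Finset.induction_on with
    | empty => simp
    | insert i S hi ih =>
      rw [Finset.prod_insert hi, Finset.sum_insert hi, map_mul, ih, LinearMap.add_apply, hc]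
      rcases hz ((∑ i ∈ S, c i) (Additive.ofMul g)) with h | h <;> rcases hgb g i with hg | hg <;>
        simp [h, hg, hbn, CharTwo.add_self_eq_zero]
  have hBne : ∀ S : Finset (Fin r), ∏ i ∈ S, b i ≠ 0 := fun S =>
    Finset.prod_ne_zero_iff.mpr fun i _ => hb0 i
  have hBsq : ∀ S : Finset (Fin r), (∏ i ∈ S, b i) ^ 2 = ((∏ i ∈ S, p i : ℤ) : K) := by
    intro S
    rw [← Finset.prod_pow, Int.cast_prod]
    exact Finset.prod_congr rfl fun i _ => hbZ i
  have hfin : Module.finrank (ZMod 2) (Additive (K ≃ₐ[F] K)) = r - 1 := by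
    refine lin_dual hr c ?_ ?_ ?_
    · intro g hg
      apply hext g.toMul
      intro i
      by_contra hne
      have := hg i
      rw [← ofMul_toMul g, hc, if_neg hne] at this
      exact one_ne_zero this
    · intro S hS
      have hfix : ∀ g : K ≃ₐ[F] K, g (∏ i ∈ S, b i) = ∏ i ∈ S, b i := by
        intro g
        rw [hcS, hS]; simp
      obtain ⟨x, hx⟩ := (IsGalois.mem_range_algebraMap_iff_fixed _).mpr hfix
      refine sq_in_F hp hd hneg hsf hdim hα S x ?_
      apply (algebraMap F K).injective
      rw [map_pow, hx, hBsq, map_intCast]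
    · apply LinearMap.ext
      intro g
      have h1 := hcS Finset.univ g.toMul
      have h3 : g.toMul (∏ i, b i) = ∏ i, b i := by
        have : (∏ i, b i) ^ 2 = (algebraMap F K α) ^ 2 := by
          rw [hBsq, ← hd, ← map_pow, hα, map_intCast]
        rcases sq_eq_sq_iff_eq_or_eq_neg.mp this with h | h <;> rw [h] <;> simp
      rw [h3] at h1
      by_contra hne
      rw [if_neg (show ¬ (∑ i, c i) (Additive.ofMul g.toMul) = 0 from hne)] at h1
      have : -(∏ i, b i) = ∏ i, b i := by linear_combination -h1
      exact hBne _ (neg_eq_self.mp this)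
  have hcard := Module.natCard_eq_pow_finrank (K := ZMod 2) (V := Additive (K ≃ₐ[F] K))
  rw [hfin, Nat.card_zmod] at hcard
  exact g2_equiv h2 (r - 1) hcard

/-- Gauss genus theory: for `F = ℚ(√d)` with `d = p₁⋯p_r < 0` squarefree,
`d ≡ 1 (mod 4)`, each `p_i` a signed prime, one has
`cl(F)/2 ≅ (ℤ/2)^{r-1}`, and `cl(F)/2 ≅ Gal(F(√p₁,…,√p_r)/F)`. -/
theorem stmt11 (F Ω : Type) [Field F] [NumberField F] [Field Ω] [Algebra F Ω]
    (r : ℕ) (p : Fin r → ℤ) (hp : ∀ i, Prime (p i))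
    (d : ℤ) (hd : d = ∏ i, p i) (hneg : d < 0) (hsf : Squarefree d) (hd4 : d % 4 = 1)
    (hdim : Module.finrank ℚ F = 2) (α : F) (hα : α ^ 2 = (d : F))
    (β : Fin r → Ω) (hβ : ∀ i, β i ^ 2 = algebraMap F Ω ((p i : F))) :
    Nonempty ((ClassGroup (𝓞 F) ⧸
        (powMonoidHom 2 : ClassGroup (𝓞 F) →* ClassGroup (𝓞 F)).range)
      ≃* (Fin (r - 1) → Multiplicative (ZMod 2))) ∧
    Nonempty ((ClassGroup (𝓞 F) ⧸
        (powMonoidHom 2 : ClassGroup (𝓞 F) →* ClassGroup (𝓞 F)).range)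
      ≃* ((IntermediateField.adjoin F (Set.range β)) ≃ₐ[F]
          (IntermediateField.adjoin F (Set.range β)))) := by
  have hr : 0 < r := by
    rcases Nat.eq_zero_or_pos r with h | h
    · subst h
      simp at hd
      omega
    · exact h
  obtain ⟨D⟩ := exists_GD hp hd hneg hsf hd4 hdim hα
  obtain ⟨e⟩ : Nonempty ((ClassGroup (𝓞 F) ⧸
        (powMonoidHom 2 : ClassGroup (𝓞 F) →* ClassGroup (𝓞 F)).range)
      ≃* (Fin (r - 1) → Multiplicative (ZMod 2))) := by
    refine g2_equiv ?_ _ (card_quot.trans (D.card_ker hr))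
    intro x
    obtain ⟨y, rfl⟩ := QuotientGroup.mk_surjective x
    rw [← QuotientGroup.mk_mul, QuotientGroup.eq_one_iff]
    exact ⟨y, by rw [powMonoidHom_apply, sq]⟩
  obtain ⟨e'⟩ := galois_part hr hp hd hneg hsf hdim hα β hβ
  exact ⟨⟨e⟩, ⟨e.trans e'.symm⟩⟩
end

section
/- Let G be a finite cyclic group of order n with generator, and let k = 0 if n is odd and k = n/2 if n is even. Then the cohomology ring H*(G, ℤ/n) with trivial coefficients is isomorphic to (ℤ/n)[x,y]/(x² - ky), where x has degree 1 and y has degree 2. -/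
/-- Inhomogeneous `i`-cochains of the cyclic group `ℤ/n` with trivial coefficients `ℤ/n`. -/
abbrev Coch (n i : ℕ) := (Fin i → Multiplicative (ZMod n)) → ZMod n

/-- The tuple obtained from `y` by multiplying the entries at positions `k` and `k+1`. -/
def contractC {n i : ℕ} (y : Fin (i + 1) → Multiplicative (ZMod n)) (k : Fin i) :
    Fin i → Multiplicative (ZMod n) :=
  fun j => if (j : ℕ) < (k : ℕ) then y (Fin.castSucc j)
    else if (j : ℕ) = (k : ℕ) then y (Fin.castSucc j) * y (Fin.succ j)
    else y (Fin.succ j)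

/-- The differential on inhomogeneous cochains (trivial action on coefficients). -/
def dT {n i : ℕ} (c : Coch n i) : Coch n (i + 1) :=
  fun y => c (Fin.tail y)
    + ∑ k : Fin i, ((-1 : ℤ) ^ ((k : ℕ) + 1)) • c (contractC y k)
    + ((-1 : ℤ) ^ (i + 1)) • c (Fin.init y)

/-- Cup product of cochains (trivial action). -/
def cupC {n i j : ℕ} (c : Coch n i) (c' : Coch n j) : Coch n (i + j) :=
  fun y => c (fun t => y (Fin.castAdd j t)) * c' (fun t => y (Fin.natAdd i t))

/-- Transport of cochains along an equality of degrees. -/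
def castCoch {n a b : ℕ} (h : a = b) (c : Coch n a) : Coch n b :=
  fun y => c (fun t => y (Fin.cast h t))

/-- Cup powers `y^{m+1}` of a degree 2 cochain. -/
def ypowC {n : ℕ} (y : Coch n 2) : (m : ℕ) → Coch n (2 * m + 2)
  | 0 => y
  | m + 1 => castCoch (by ring) (cupC y (ypowC y m))

open CategoryTheory

lemma my_contract {n i : ℕ} (y : Fin (i + 1) → Multiplicative (ZMod n)) (k : Fin i) :
    Fin.contractNth k.castSucc (· * ·) y = contractC y k := by
  funext j
  simp [Fin.contractNth, contractC]

lemma my_contract_last {n i : ℕ} (y : Fin (i + 1) → Multiplicative (ZMod n)) :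
    Fin.contractNth (Fin.last i) (· * ·) y = Fin.init y := by
  funext j
  simp [Fin.contractNth, Fin.init]

abbrev myRep (n : ℕ) : Rep (ZMod n) (Multiplicative (ZMod n)) :=
  Rep.trivial (ZMod n) (Multiplicative (ZMod n)) (ZMod n)

lemma my_d {n i : ℕ} (c : Coch n i) :
    (inhomogeneousCochains.d (myRep n) i).hom c = dT c := by
  funext y
  rw [inhomogeneousCochains.d_hom_apply]
  rw [Fin.sum_univ_castSucc]
  simp only [my_contract, my_contract_last]
  simp [dT, add_assoc]
  rfl

lemma my_pi_eq_zero {n : ℕ} (i : ℕ) (c : Coch n (i + 1))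
    (h : inhomogeneousCochains.d (myRep n) (i + 1) c = 0)
    (h0 : groupCohomology.π (myRep n) (i + 1) (groupCohomology.cocyclesMk c h) = 0) :
    ∃ b : Coch n i, c = dT b := by
  have hex := ((groupCohomology.inhomogeneousCochains (myRep n)).sc' i (i+1) (i+2))
  have := (groupCohomology.inhomogeneousCochains (myRep n)).toCycles_comp_homologyπ i (i+1)
  let K := groupCohomology.inhomogeneousCochains (myRep n)
  let S := ShortComplex.mk (K.toCycles i (i+1)) (K.homologyπ (i+1)) (by simp)
  have hS : S.Exact := S.exact_of_g_is_cokernel (K.homologyIsCokernel i (i+1) (by simp))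
  rw [ShortComplex.moduleCat_exact_iff] at hS
  obtain ⟨b, hb⟩ := hS _ h0
  refine ⟨b, ?_⟩
  rw [← my_d]
  have h1 := congrArg (K.iCycles (i+1)) hb
  erw [groupCohomology.iCocycles_mk] at h1
  rw [← h1]
  change _ = _
  have h2 : K.toCycles i (i+1) ≫ K.iCycles (i+1) = K.d i (i+1) := K.toCycles_i i (i+1)
  have h3 := congrArg (fun f => f.hom b) h2
  have h4 : K.d i (i+1) = inhomogeneousCochains.d (myRep n) i := groupCohomology.inhomogeneousCochains.d_def (A := myRep n) i
  rw [h4] at h3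
  exact h3

lemma my_card {n : ℕ} [NeZero n] (i : ℕ) :
    Finite (groupCohomology (myRep n) (i+1)) ∧ Nat.card (groupCohomology (myRep n) (i+1)) ≤ n := by
  have hg : ∀ x : Multiplicative (ZMod n), x ∈ Subgroup.zpowers (Multiplicative.ofAdd (1 : ZMod n)) := by
    intro x
    refine ⟨(x.toAdd.val : ℤ), ?_⟩
    apply Multiplicative.toAdd.injective
    simp
  have key : ∀ (P : Submodule (ZMod n) (ZMod n)) (f : ModuleCat.of (ZMod n) P ⟶ groupCohomology (myRep n) (i+1)), Epi f → 
      Finite (groupCohomology (myRep n) (i+1)) ∧ Nat.card (groupCohomology (myRep n) (i+1)) ≤ n := by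
    intro P f hf
    have hs := (ModuleCat.epi_iff_surjective f).1 hf
    have : Finite P := inferInstance
    refine ⟨Finite.of_surjective (α := P) _ hs, ?_⟩
    calc _ ≤ Nat.card P := Nat.card_le_card_of_surjective (α := P) _ hs
      _ ≤ Nat.card (ZMod n) := Nat.card_le_card_of_injective _ Subtype.val_injective
      _ = n := Nat.card_zmod n
  rcases Nat.even_or_odd (i+1) with h | h
  · exact key _ (Rep.FiniteCyclicGroup.groupCohomologyπEven (myRep n) _ hg (i+1) h) (epi_comp' (@IsIso.epi_of_iso _ _ _ _ _ (Iso.isIso_inv _)) (epi_comp' inferInstance inferInstance))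
  · exact key _ (Rep.FiniteCyclicGroup.groupCohomologyπOdd (myRep n) _ hg (i+1) h) (epi_comp' (@IsIso.epi_of_iso _ _ _ _ _ (Iso.isIso_inv _)) (epi_comp' inferInstance inferInstance))

def peel {n i : ℕ} (c : Coch n (i+1)) (g : Multiplicative (ZMod n)) : Coch n i :=
  fun y => c (Fin.cons g y)

lemma my_contract_zero {n i : ℕ} (g : Multiplicative (ZMod n)) (y : Fin (i + 1) → Multiplicative (ZMod n)) :
    contractC (Fin.cons g y : Fin (i+2) → _) 0 = Fin.cons (g * y 0) (Fin.tail y) := by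
  funext j
  refine Fin.cases ?_ (fun j => ?_) j
  · simp [contractC]
  · simp [contractC, Fin.tail]

lemma my_contract_succ {n i : ℕ} (g : Multiplicative (ZMod n)) (y : Fin (i + 1) → Multiplicative (ZMod n)) (k : Fin i) :
    contractC (Fin.cons g y : Fin (i+2) → _) k.succ = Fin.cons g (contractC y k) := by
  funext j
  refine Fin.cases ?_ (fun j => ?_) j
  · simp [contractC]
  · simp [contractC]

lemma my_init_cons {n i : ℕ} (g : Multiplicative (ZMod n)) (y : Fin (i + 1) → Multiplicative (ZMod n)) :
    Fin.init (Fin.cons g y : Fin (i+2) → Multiplicative (ZMod n)) = Fin.cons g (Fin.init y) := by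
  funext j
  refine Fin.cases ?_ (fun j => ?_) j
  · simp [Fin.init]
  · simp [Fin.init]

lemma my_d_cons {n i : ℕ} (c : Coch n (i+1)) (g : Multiplicative (ZMod n)) (y : Fin (i + 1) → Multiplicative (ZMod n)) :
    dT c (Fin.cons g y) = c y - c (Fin.cons (g * y 0) (Fin.tail y)) - dT (peel c g) y
      + c (Fin.cons g (Fin.tail y)) := by
  simp only [dT, peel]
  rw [Fin.sum_univ_succ, my_contract_zero, my_init_cons, Fin.tail_cons]
  simp only [my_contract_succ]
  simp [pow_succ]
  ring

lemma my_d_zero {n : ℕ} (c : Coch n 0) : dT c = 0 := by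
  funext y
  simp [dT, Subsingleton.elim (Fin.tail y) (Fin.init y)]

def dO {n i : ℕ} (c : Coch n i) : Coch n (i+1) := fun y => dT c y - c (Fin.tail y)

def my_t (n : ℕ) : Multiplicative (ZMod n) := Multiplicative.ofAdd 1

def TT {n : ℕ} [NeZero n] : (i : ℕ) → Coch n i → ZMod n
  | 0, c => c Fin.elim0
  | i+1, c => if Even i then TT i (peel c (my_t n)) else ∑ a : ZMod n, TT i (peel c (.ofAdd a))

lemma TT_add {n : ℕ} [NeZero n] (i : ℕ) (c c' : Coch n i) : TT i (c + c') = TT i c + TT i c' := by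
  induction i with
  | zero => rfl
  | succ i ih =>
    have : ∀ g, peel (c + c') g = peel c g + peel c' g := fun g => rfl
    simp only [TT, this, ih, Finset.sum_add_distrib]
    split_ifs <;> rfl

lemma TT_smul {n : ℕ} [NeZero n] (i : ℕ) (a : ZMod n) (c : Coch n i) : TT i (a • c) = a * TT i c := by
  induction i with
  | zero => rfl
  | succ i ih =>
    have : ∀ g, peel (a • c) g = a • peel c g := fun g => rfl
    simp only [TT, this, ih, ← Finset.mul_sum]
    split_ifs <;> rfl

lemma TT_sub {n : ℕ} [NeZero n] (i : ℕ) (c c' : Coch n i) : TT i (c - c') = TT i c - TT i c' := by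
  have : c - c' = c + (-1 : ZMod n) • c' := by
    funext y; simp [sub_eq_add_neg]
  rw [this, TT_add, TT_smul]; ring

lemma peel_dO {n i : ℕ} (c : Coch n (i+1)) (g : Multiplicative (ZMod n)) :
    peel (dO c) g = (-1 : ZMod n) • (fun y : Fin (i+1) → _ => c (Fin.cons (g * y 0) (Fin.tail y))) - dO (peel c g) := by
  funext y
  simp [peel, dO, my_d_cons]
  ring

lemma peel_aux {n i : ℕ} (c : Coch n (i+1)) (g h : Multiplicative (ZMod n)) :
    peel (fun y : Fin (i+1) → _ => c (Fin.cons (g * y 0) (Fin.tail y))) h = peel c (g * h) := by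
  funext y
  simp [peel]

lemma TT_dO {n : ℕ} [NeZero n] (i : ℕ) (c : Coch n i) :
    TT (i+1) (dO c) = if Even i then - TT i c else 0 := by
  induction i with
  | zero =>
    simp [TT, peel, dO, my_d_zero]
  | succ i ih =>
    rw [TT]
    simp only [peel_dO, TT_sub, TT_smul, ih]
    by_cases h : Even i
    · have h' : ¬ Even (i+1) := by simpa [Nat.even_add_one] using h
      simp only [h, h', if_true, if_false]
      simp only [TT, h, if_true, peel_aux, Finset.sum_sub_distrib]
      rw [← Finset.mul_sum, Finset.sum_neg_distrib]
      have : ∑ a : ZMod n, TT i (peel c (.ofAdd a * my_t n)) = ∑ a : ZMod n, TT i (peel c (.ofAdd a)) :=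
        Equiv.sum_comp (Equiv.addRight (1 : ZMod n)) (fun a => TT i (peel c (.ofAdd a)))
      rw [this]; ring
    · have h' : Even (i+1) := by simpa [Nat.even_add_one] using h
      simp only [h, h', if_true, if_false]
      simp only [TT, h, if_false, peel_aux]
      have : ∑ a : ZMod n, TT i (peel c (my_t n * .ofAdd a)) = ∑ a : ZMod n, TT i (peel c (.ofAdd a)) :=
        Equiv.sum_comp (Equiv.addLeft (1 : ZMod n)) (fun a => TT i (peel c (.ofAdd a)))
      rw [this]; ring

lemma TT_dT {n : ℕ} [NeZero n] (i : ℕ) (c : Coch n i) : TT (i+1) (dT c) = 0 := by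
  have h : dT c = dO c + fun y => c (Fin.tail y) := by funext y; simp [dO]
  have hp : ∀ g, peel (fun y : Fin (i+1) → _ => c (Fin.tail y)) g = c := by
    intro g; funext y; simp [peel]
  rw [h, TT_add, TT_dO]
  simp only [TT, hp]
  split_ifs <;> simp

lemma my_main {n : ℕ} [NeZero n] (i : ℕ) (gen : Coch n (i+1)) (hgen : dT gen = 0)
    (hT : TT (i+1) gen = 1) (c : Coch n (i+1)) (hc : dT c = 0) :
    ∃! a : ZMod n, ∃ b : Coch n i, c = a • gen + dT b := by
  obtain ⟨hfin, hcard⟩ := my_card (n := n) i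
  have hz : ∀ e : Coch n (i+1), dT e = 0 → inhomogeneousCochains.d (myRep n) (i + 1) e = 0 := by
    intro e he; exact (my_d e).trans he
  have hcyc : ∀ a : ZMod n, inhomogeneousCochains.d (myRep n) (i + 1) (a • gen) = 0 := by
    intro a; rw [map_smul, hz _ hgen, smul_zero]
  have hsub : ∀ (e f : Coch n (i+1)) (he : inhomogeneousCochains.d (myRep n) (i + 1) e = 0)
      (hf : inhomogeneousCochains.d (myRep n) (i + 1) f = 0),
      groupCohomology.π (myRep n) (i + 1) (groupCohomology.cocyclesMk e he) =
      groupCohomology.π (myRep n) (i + 1) (groupCohomology.cocyclesMk f hf) → ∃ b : Coch n i, e = f + dT b := by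
    intro e f he hf h
    have hef : inhomogeneousCochains.d (myRep n) (i + 1) (e - f) = 0 := by
      rw [map_sub, he, hf, sub_zero]
    have : groupCohomology.cocyclesMk (A := myRep n) (n := i+1) (e - f) hef = groupCohomology.cocyclesMk (A := myRep n) (n := i+1) e he - groupCohomology.cocyclesMk (A := myRep n) (n := i+1) f hf := by
      apply (ModuleCat.mono_iff_injective (groupCohomology.iCocycles (myRep n) (i+1))).1 inferInstance
      rw [map_sub, groupCohomology.iCocycles_mk, groupCohomology.iCocycles_mk, groupCohomology.iCocycles_mk]
    obtain ⟨b, hb⟩ := my_pi_eq_zero i (e - f) hef (by rw [this, map_sub, h, sub_self])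
    exact ⟨b, by rw [← hb]; abel⟩
  let F : ZMod n → groupCohomology (myRep n) (i+1) := fun a =>
    groupCohomology.π (myRep n) (i + 1) (groupCohomology.cocyclesMk (a • gen) (hcyc a))
  have hF : Function.Injective F := by
    intro a a' h
    obtain ⟨b, hb⟩ := hsub _ _ _ _ h
    have := congrArg (TT (i+1)) hb
    simpa [TT_add, TT_smul, TT_dT, hT] using this
  have hFs : Function.Surjective F := by
    have : Nat.card (groupCohomology (myRep n) (i+1)) ≤ Nat.card (ZMod n) := by
      rwa [Nat.card_zmod]
    exact (Function.Injective.bijective_of_nat_card_le hF this).2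
  obtain ⟨a, ha⟩ := hFs (groupCohomology.π (myRep n) (i + 1) (groupCohomology.cocyclesMk c (hz c hc)))
  refine ⟨a, hsub _ _ _ _ ha.symm, ?_⟩
  rintro a' ⟨b', hb'⟩
  obtain ⟨b, hb⟩ := hsub _ _ _ _ ha.symm
  have := congrArg (TT (i+1)) (hb'.symm.trans hb)
  simpa [TT_add, TT_smul, TT_dT, hT] using this

def carZ {n : ℕ} (a b : ZMod n) : ℤ := if n ≤ a.val + b.val then 1 else 0

lemma carZ_spec {n : ℕ} [NeZero n] (a b : ZMod n) :
    (n : ℤ) * carZ a b = a.val + b.val - (a + b).val := by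
  unfold carZ
  split_ifs with h
  · have := ZMod.val_add_val_of_le h
    have h' : (a.val : ℤ) + b.val = (a + b).val + n := by exact_mod_cast this
    linarith
  · rw [ZMod.val_add_of_lt (not_le.1 h)]
    push_cast; ring

lemma carZ_cocycle {n : ℕ} [NeZero n] (a b c : ZMod n) :
    carZ b c - carZ (a + b) c + carZ a (b + c) - carZ a b = 0 := by
  have hn : (n : ℤ) ≠ 0 := by exact_mod_cast NeZero.ne n
  apply mul_left_cancel₀ hn
  have h1 := carZ_spec b c
  have h2 := carZ_spec (a + b) c
  have h3 := carZ_spec a (b + c)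
  have h4 := carZ_spec a b
  rw [add_assoc] at h2
  linear_combination h1 - h2 + h3 - h4

lemma carZ_sum {n : ℕ} [NeZero n] : ∑ a : ZMod n, ((carZ a 1 : ℤ) : ZMod n) = 1 := by
  have hn : (n : ℤ) ≠ 0 := by exact_mod_cast NeZero.ne n
  have h : ∑ a : ZMod n, carZ a 1 = ((1 : ZMod n).val : ℤ) := by
    apply mul_left_cancel₀ hn
    rw [Finset.mul_sum]
    simp only [carZ_spec]
    rw [Finset.sum_sub_distrib, Finset.sum_add_distrib]
    have : ∑ a : ZMod n, ((a + 1).val : ℤ) = ∑ a : ZMod n, (a.val : ℤ) :=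
      Equiv.sum_comp (Equiv.addRight (1 : ZMod n)) (fun a => (a.val : ℤ))
    rw [this]
    simp [ZMod.card]
  rw [← Int.cast_sum, h]
  simp

def genX (n : ℕ) : Coch n 1 := fun v => (v 0).toAdd
def genY (n : ℕ) : Coch n 2 := fun v => ((carZ (v 0).toAdd (v 1).toAdd : ℤ) : ZMod n)

lemma genY_coc {n : ℕ} [NeZero n] (a b c : Multiplicative (ZMod n)) :
    ((carZ b.toAdd c.toAdd : ℤ) : ZMod n) - (carZ (a * b).toAdd c.toAdd : ℤ)
      + (carZ a.toAdd (b * c).toAdd : ℤ) - (carZ a.toAdd b.toAdd : ℤ) = 0 := by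
  exact_mod_cast congrArg (Int.cast : ℤ → ZMod n) (carZ_cocycle a.toAdd b.toAdd c.toAdd)

lemma dT_smul {n i : ℕ} (a : ZMod n) (c : Coch n i) : dT (a • c) = a • dT c := by
  funext y
  simp [dT, mul_add, Finset.mul_sum, mul_left_comm]

lemma cupX_apply {n i : ℕ} (h : 1 + i = i + 1) (c : Coch n i) (g : Multiplicative (ZMod n))
    (z : Fin i → Multiplicative (ZMod n)) :
    castCoch h (cupC (genX n) c) (Fin.cons g z) = g.toAdd * c z := by
  simp only [castCoch, cupC, genX]
  congr 2
  funext t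
  have : Fin.cast h (Fin.natAdd 1 t) = t.succ := by ext; simp [add_comm]
  rw [this, Fin.cons_succ]

lemma cupY_apply {n i : ℕ} (h : 2 + i = i + 2) (c : Coch n i) (g g' : Multiplicative (ZMod n))
    (z : Fin i → Multiplicative (ZMod n)) :
    castCoch h (cupC (genY n) c) (Fin.cons g (Fin.cons g' z : Fin (i+1) → Multiplicative (ZMod n)))
      = (carZ g.toAdd g'.toAdd : ℤ) * c z := by
  simp only [castCoch, cupC, genY]
  congr 2
  funext t
  have : Fin.cast h (Fin.natAdd 2 t) = t.succ.succ := by ext; simp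
  rw [this, Fin.cons_succ, Fin.cons_succ]

lemma dT_cupX {n i : ℕ} (h : 1 + i = i + 1) (c : Coch n i) (hc : dT c = 0) :
    dT (castCoch h (cupC (genX n) c)) = 0 := by
  have hp : ∀ g, peel (castCoch h (cupC (genX n) c)) g = g.toAdd • c := by
    intro g; funext z; exact cupX_apply h c g z
  funext y
  rw [← Fin.cons_self_tail y, my_d_cons, hp, dT_smul, hc]
  generalize Fin.tail y = w
  rw [← Fin.cons_self_tail w]
  simp only [cupX_apply, Fin.tail_cons, Fin.cons_zero, toAdd_mul]
  simp
  ring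

lemma dT_cupY {n i : ℕ} [NeZero n] (h : 2 + i = i + 2) (c : Coch n i) (hc : dT c = 0) :
    dT (castCoch h (cupC (genY n) c)) = 0 := by
  have hp : ∀ g g', peel (peel (castCoch h (cupC (genY n) c)) g) g' =
      ((carZ g.toAdd g'.toAdd : ℤ) : ZMod n) • c := by
    intro g g'; funext z; exact cupY_apply h c g g' z
  funext y
  obtain ⟨g, z, rfl⟩ : ∃ g z, y = Fin.cons g z := ⟨_, _, (Fin.cons_self_tail y).symm⟩
  obtain ⟨g', w, rfl⟩ : ∃ g z', z = Fin.cons g z' := ⟨_, _, (Fin.cons_self_tail z).symm⟩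
  obtain ⟨g'', v, rfl⟩ : ∃ g z', w = Fin.cons g z' := ⟨_, _, (Fin.cons_self_tail w).symm⟩
  rw [my_d_cons, my_d_cons, hp, dT_smul, hc]
  simp only [peel, cupY_apply, Fin.tail_cons, Fin.cons_zero]
  simp only [smul_zero, Pi.zero_apply]
  linear_combination c v * genY_coc g g' g''

lemma dT_X {n : ℕ} : dT (genX n) = 0 := by
  funext y
  simp [dT, genX, contractC, Fin.tail, Fin.init]

lemma dT_Y {n : ℕ} [NeZero n] : dT (genY n) = 0 := by
  funext y
  have := genY_coc (y 0) (y 1) (y 2)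
  simp [dT, genY, contractC, Fin.tail, Fin.init, Fin.sum_univ_succ] at this ⊢
  linear_combination this

lemma dT_ypow {n : ℕ} [NeZero n] (m : ℕ) : dT (ypowC (genY n) m) = 0 := by
  induction m with
  | zero => exact dT_Y
  | succ m ih => exact dT_cupY (i := 2 * m + 2) (by ring) _ ih

lemma TT_cupX {n i : ℕ} [NeZero n] (hi : Even i) (h : 1 + i = i + 1) (c : Coch n i) :
    TT (i+1) (castCoch h (cupC (genX n) c)) = TT i c := by
  have hp : ∀ g, peel (castCoch h (cupC (genX n) c)) g = g.toAdd • c := by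
    intro g; funext z; exact cupX_apply h c g z
  simp [TT, hi, hp, TT_smul, my_t]

lemma TT_cupY {n i : ℕ} [NeZero n] (hi : Even i) (h : 2 + i = i + 2) (c : Coch n i) :
    TT (i+2) (castCoch h (cupC (genY n) c)) = TT i c := by
  have hp : ∀ g g', peel (peel (castCoch h (cupC (genY n) c)) g) g' =
      ((carZ g.toAdd g'.toAdd : ℤ) : ZMod n) • c := by
    intro g g'; funext z; exact cupY_apply h c g g' z
  have hi' : ¬ Even (i+1) := by simpa [Nat.even_add_one] using hi
  simp only [TT, hi, hi', if_true, if_false, hp, TT_smul, my_t]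
  rw [← Finset.sum_mul]
  simp [carZ_sum]

lemma TT_ypow {n : ℕ} [NeZero n] (m : ℕ) : TT (2 * m + 2) (ypowC (genY n) m) = 1 := by
  induction m with
  | zero =>
    have : TT 2 (genY n) = ∑ a : ZMod n, ((carZ a 1 : ℤ) : ZMod n) := by
      simp [TT, peel, genY, my_t]
    exact this.trans carZ_sum
  | succ m ih => exact (TT_cupY (i := 2 * m + 2) ⟨m+1, by ring⟩ (by ring) _).trans ih

lemma two_choose (v : ℕ) : 2 * (v.choose 2 : ℤ) = v * (v - 1) := by
  induction v with
  | zero => simp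
  | succ v ih =>
    rw [Nat.choose_succ_succ' v 1]
    push_cast [Nat.choose_one_right]
    linear_combination ih

lemma k_eq {n k : ℕ} (hn : 0 < n) (hk : k = if Odd n then 0 else n / 2) :
    (k : ZMod n) = (n.choose 2 : ℕ) := by
  have h2 := two_choose n
  split_ifs at hk with h
  · obtain ⟨r, hr⟩ := h
    have : n.choose 2 = n * r := by
      zify
      rw [hr] at h2 ⊢
      push_cast at h2 ⊢
      linarith
    rw [this, hk]; simp
  · obtain ⟨r, hr⟩ := Nat.not_odd_iff_even.1 h
    have hkr : k = r := by omega
    have : (n.choose 2 : ℤ) = n * (r - 1) + r := by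
      rw [hr] at h2 ⊢
      push_cast at h2 ⊢
      linarith
    have := congrArg (Int.cast : ℤ → ZMod n) this
    push_cast at this
    rw [this, hkr]; simp

lemma choose_id {n : ℕ} [NeZero n] (a c : ZMod n) :
    a * c = (n.choose 2 : ℕ) * ((carZ a c : ℤ) : ZMod n) +
      (((a + c).val.choose 2 : ℕ) - (a.val.choose 2 : ℕ) - (c.val.choose 2 : ℕ)) := by
  have hs := carZ_spec a c
  have he : carZ a c * carZ a c = carZ a c := by unfold carZ; split_ifs <;> simp
  have h : (a.val * c.val : ℤ) = (n.choose 2 : ℕ) * carZ a c +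
      (((a + c).val.choose 2 : ℕ) - (a.val.choose 2 : ℕ) - (c.val.choose 2 : ℕ))
      + n * ((a + c).val * carZ a c) := by
    have h1 := two_choose a.val
    have h2 := two_choose c.val
    have h3 := two_choose (a + c).val
    have h4 := two_choose n
    generalize carZ a c = e at *
    generalize ((a + c).val : ℤ) = S at *
    have hA : (a.val : ℤ) = S + n * e - c.val := by linarith
    rw [hA] at h1 ⊢
    apply mul_left_cancel₀ (two_ne_zero : (2 : ℤ) ≠ 0)
    linear_combination h1 + h2 - h3 - e * h4 + n^2 * he
  have := congrArg (Int.cast : ℤ → ZMod n) h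
  push_cast at this
  simpa using this

/-- For the cyclic group `G = ℤ/n` (with `k = 0` if `n` is odd and `k = n/2` if `n` is
even), the cohomology ring `H*(G, ℤ/n)` is `(ℤ/n)[x,y]/(x² - ky)` with `deg x = 1`,
`deg y = 2`: there are cocycles `x, y` with `x ∪ x = k·y` up to coboundary, such that
`H⁰ ≅ ℤ/n`, and each positive-degree cohomology group is freely generated over `ℤ/n`
by the class of the appropriate monomial `y^m` or `x·y^m`. -/
theorem stmt12 (n : ℕ) (hn : 0 < n) (k : ℕ) (hk : k = if Odd n then 0 else n / 2) :
    ∃ (x : Coch n 1) (y : Coch n 2), dT x = 0 ∧ dT y = 0 ∧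
      (∃ b : Coch n 1, cupC x x = (k : ZMod n) • y + dT b) ∧
      (Function.Bijective fun c : ZMod n => (fun _ => c : Coch n 0)) ∧
      (∀ c : Coch n 1, dT c = 0 → ∃! a : ZMod n, ∃ b : Coch n 0, c = a • x + dT b) ∧
      (∀ m : ℕ, ∀ c : Coch n (2 * m + 2), dT c = 0 →
        ∃! a : ZMod n, ∃ b : Coch n (2 * m + 1), c = a • ypowC y m + dT b) ∧
      (∀ m : ℕ, ∀ c : Coch n (2 * m + 3), dT c = 0 →
        ∃! a : ZMod n, ∃ b : Coch n (2 * m + 2),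
          c = a • castCoch (by ring) (cupC x (ypowC y m)) + dT b) := by
  haveI : NeZero n := ⟨hn.ne'⟩
  refine ⟨genX n, genY n, dT_X, dT_Y, ⟨fun v => -(((v 0).toAdd.val.choose 2 : ℕ) : ZMod n), ?_⟩, ⟨?_, ?_⟩, ?_, ?_, ?_⟩
  · funext v
    have := choose_id (v 0).toAdd (v 1).toAdd
    rw [← k_eq hn hk] at this
    simp [cupC, genX, genY, dT, contractC, Fin.tail, Fin.init] at this ⊢
    linear_combination this
  · intro a b h
    exact congrFun h Fin.elim0
  · intro c
    exact ⟨c Fin.elim0, by funext v; exact congrArg c (Subsingleton.elim _ _)⟩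
  · intro c hc
    exact my_main 0 (genX n) dT_X (by simp [TT, peel, genX, my_t]) c hc
  · intro m c hc
    exact my_main (2 * m + 1) _ (dT_ypow m) (TT_ypow m) c hc
  · intro m c hc
    exact my_main (2 * m + 2) _ (dT_cupX (i := 2 * m + 2) (by ring) _ (dT_ypow m))
      ((TT_cupX (i := 2 * m + 2) ⟨m+1, by ring⟩ (by ring) _).trans (TT_ypow m)) c hc
end

section
/- Let Δ and π be groups (π a tuple of groups with maps to Δ) and A, B, C discrete Δ-modules with a pairing A ⊗ B → C. On the relative (cone) cohomology H*(Δ,π;−), the cup products (α,β) ∪ γ = (α ∪ γ, β ∪ γ|_π) and γ ∪ (α,β) = (γ ∪ α, (-1)^{deg γ} γ|_π ∪ β) satisfy graded commutativity: (α,β) ∪ γ = (-1)^{ij} γ ∪ (α,β) for (α,β) ∈ H^i(Δ,π;A) and γ ∈ H^j(Δ,B). -/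
/-- The tuple obtained from `y` by multiplying the entries at positions `k` and `k+1`. -/
def contractG {G : Type*} [Group G] {i : ℕ} (y : Fin (i + 1) → G) (k : Fin i) :
    Fin i → G :=
  fun j => if (j : ℕ) < (k : ℕ) then y (Fin.castSucc j)
    else if (j : ℕ) = (k : ℕ) then y (Fin.castSucc j) * y (Fin.succ j)
    else y (Fin.succ j)

/-- The inhomogeneous differential on cochains of `G` with values in a `Δ`-module `M`,
where `G` acts through the homomorphism `f : G → Δ`. -/
def dRel {G Δ M : Type*} [Group G] [Group Δ] [AddCommGroup M] [DistribMulAction Δ M]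
    (f : G →* Δ) {i : ℕ} (c : (Fin i → G) → M) : (Fin (i + 1) → G) → M :=
  fun y => f (y 0) • c (Fin.tail y)
    + ∑ k : Fin i, ((-1 : ℤ) ^ ((k : ℕ) + 1)) • c (contractG y k)
    + ((-1 : ℤ) ^ (i + 1)) • c (Fin.init y)

/-- Cup product of cochains with respect to a pairing `p : A ⊗ B → C`:
`(c ∪ c')(y₁,…,y_{i+j}) = p(c(y₁,…,y_i), (y₁⋯y_i)·c'(y_{i+1},…,y_{i+j}))`. -/
def cupP {G Δ A B C : Type*} [Group G] [Group Δ] [AddCommGroup A] [AddCommGroup B]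
    [AddCommGroup C] [DistribMulAction Δ B] (f : G →* Δ) (p : A →+ B →+ C) {i j : ℕ}
    (c : (Fin i → G) → A) (c' : (Fin j → G) → B) : (Fin (i + j) → G) → C :=
  fun y => p (c (fun t => y (Fin.castAdd j t)))
    (f (List.ofFn (fun t : Fin i => y (Fin.castAdd j t))).prod •
      c' (fun t => y (Fin.natAdd i t)))

/-- Transport of cochains along an equality of degrees. -/
def castC {G M : Type*} {a b : ℕ} (h : a = b) (c : (Fin a → G) → M) :
    (Fin b → G) → M :=
  fun y => c (fun t => y (Fin.cast h t))


def dlX (m : ℕ) : ℕ → ℕ := fun t => if t < m then t else t + 1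
def phX (k b : ℕ) : ℕ → ℕ := fun t => if t ≤ k then t else t + b - 1
def sgX (k : ℕ) : ℕ → ℕ := fun t => t + k

def LocX {X M : Type*} (n : ℕ) (F : (ℕ → X) → M) : Prop :=
  ∀ x y : ℕ → X, (∀ t, t ≤ n → x t = y t) → F x = F y

def DX {X M : Type*} [AddCommGroup M] (n : ℕ) (F : (ℕ → X) → M) (x : ℕ → X) : M :=
  ∑ m ∈ Finset.range (n + 1), ((-1 : ℤ) ^ m) • F (x ∘ dlX m)

def c1X {X A B C : Type*} [AddCommGroup A] [AddCommGroup B] [AddCommGroup C]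
    (p : A →+ B →+ C) (a b : ℕ) (F : (ℕ → X) → A) (F' : (ℕ → X) → B) (x : ℕ → X) : C :=
  ∑ k ∈ Finset.range a, ((-1 : ℤ) ^ ((a + k + 1) * b + k + 1)) •
    p (F (x ∘ phX k b)) (F' (x ∘ sgX k))

theorem signA (a b k : ℕ) : ((-1 : ℤ) ^ ((a + 1 + k + 1) * b + k + 1))
    = (-1) ^ b * (-1) ^ ((a + k + 1) * b + k + 1) := by ring

theorem signB (a b k : ℕ) : ((-1 : ℤ) ^ ((a + 1 + (k + 1) + 1) * b + (k + 1) + 1))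
    = - (-1) ^ ((a + k + 1) * b + k + 1) := by
  have : (a + 1 + (k + 1) + 1) * b + (k + 1) + 1 = ((a + k + 1) * b + k + 1) + 2 * b + 1 := by ring
  rw [this, pow_succ, pow_add, pow_mul]; simp

theorem c1X_main {X A B C : Type*} [AddCommGroup A] [AddCommGroup B] [AddCommGroup C]
    (p : A →+ B →+ C) (a b : ℕ) (F : (ℕ → X) → A) (F' : (ℕ → X) → B)
    (hF : LocX a F) (hF' : LocX b F') (hD : ∀ x, DX (b + 1) F' x = 0) (x : ℕ → X) :
    p (F x) (F' (x ∘ sgX a)) - ((-1 : ℤ) ^ (a * b)) • p (F (x ∘ sgX b)) (F' x)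
      = DX (a + b) (c1X p a b F F') x + c1X p (a + 1) b (DX (a + 1) F) F' x := by
  set s : ℕ → ℤ := fun k => (-1 : ℤ) ^ ((a + k + 1) * b + k + 1) with hs
  -- first term
  have T1 : DX (a + b) (c1X p a b F F') x = ∑ k ∈ Finset.range a,
      (s k • (∑ m ∈ Finset.range (k + 1), ((-1 : ℤ) ^ m) •
          p (F (x ∘ phX (k + 1) b ∘ dlX m)) (F' (x ∘ sgX (k + 1))))
      + s k • (-((-1 : ℤ) ^ k • p (F (x ∘ phX k (b + 1))) (F' (x ∘ sgX (k + 1))))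
            + (-1 : ℤ) ^ (k + b) • p (F (x ∘ phX k (b + 1))) (F' (x ∘ sgX k)))
      + s k • (∑ r ∈ Finset.range (a - k), ((-1 : ℤ) ^ (k + b + 1 + r)) •
          p (F (x ∘ phX k b ∘ dlX (k + 2 + r))) (F' (x ∘ sgX k)))) := by
    unfold DX c1X
    simp only [Finset.smul_sum]
    rw [Finset.sum_comm]
    refine Finset.sum_congr rfl fun k hk => ?_
    have hk := Finset.mem_range.1 hk
    have hn : a + b + 1 = (k + 1) + b + (a - k) := by omega
    rw [hn, Finset.sum_range_add, Finset.sum_range_add]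
    congr 1
    · congr 1
      · refine Finset.sum_congr rfl fun m hm => ?_
        have hm := Finset.mem_range.1 hm
        rw [smul_comm]
        congr 3
        · congr 2
          funext t
          simp only [Function.comp, dlX, phX]
          congr 1
          grind
        · congr 1
          funext t
          simp only [Function.comp, dlX, sgX]
          congr 1
          grind
      · have h0 := hD (x ∘ sgX k)
        unfold DX at h0
        rw [Finset.sum_range_succ, Finset.sum_range_succ'] at h0
        have e0 : F' ((x ∘ sgX k) ∘ dlX 0) = F' (x ∘ sgX (k + 1)) := by
          congr 1; funext t; simp only [Function.comp, dlX, sgX]; congr 1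
          grind
        have e1 : F' ((x ∘ sgX k) ∘ dlX (b + 1)) = F' (x ∘ sgX k) := by
          apply hF'; intro t ht; simp only [Function.comp, dlX, sgX]; congr 1
          grind
        rw [e0, e1] at h0
        have h1 : ∑ m ∈ Finset.range b, ((-1 : ℤ) ^ (m + 1)) • F' ((x ∘ sgX k) ∘ dlX (m + 1))
            = - F' (x ∘ sgX (k + 1)) + (-1 : ℤ) ^ b • F' (x ∘ sgX k) := by
          rw [← sub_eq_zero, ← h0]; rw [pow_succ _ b]; module
        have h2 : ∀ m ∈ Finset.range b, ((-1 : ℤ) ^ (k + 1 + m)) • s k •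
              p (F ((x ∘ dlX (k + 1 + m)) ∘ phX k b)) (F' ((x ∘ dlX (k + 1 + m)) ∘ sgX k))
            = (s k * (-1) ^ k) • p (F (x ∘ phX k (b + 1)))
                (((-1 : ℤ) ^ (m + 1)) • F' ((x ∘ sgX k) ∘ dlX (m + 1))) := by
          intro m hm
          have hm := Finset.mem_range.1 hm
          have q1 : F ((x ∘ dlX (k + 1 + m)) ∘ phX k b) = F (x ∘ phX k (b + 1)) := by
            congr 1; funext t; simp only [Function.comp, dlX, phX]; congr 1
            grind
          have q2 : (x ∘ dlX (k + 1 + m)) ∘ sgX k = (x ∘ sgX k) ∘ dlX (m + 1) := by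
            funext t; simp only [Function.comp, dlX, sgX]; congr 1
            grind
          rw [q1, q2, map_zsmul, smul_smul, smul_smul]
          congr 1
          ring
        rw [Finset.sum_congr rfl h2, ← Finset.smul_sum, ← map_sum, h1, map_add, map_neg, map_zsmul,
          pow_add]
        module
    · refine Finset.sum_congr rfl fun r hr => ?_
      have hr := Finset.mem_range.1 hr
      rw [smul_comm]
      have q1 : F ((x ∘ dlX (k + 1 + b + r)) ∘ phX k b) = F (x ∘ phX k b ∘ dlX (k + 2 + r)) := by
        congr 1; funext t; simp only [Function.comp, dlX, phX]; congr 1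
        grind
      have q2 : F' ((x ∘ dlX (k + 1 + b + r)) ∘ sgX k) = F' (x ∘ sgX k) := by
        apply hF'; intro t ht; simp only [Function.comp, dlX, sgX]; congr 1
        grind
      rw [q1, q2]
      congr 2
      ring
  set L : ℕ → C := fun k => ((-1 : ℤ) ^ ((a + 1 + k + 1) * b + k + 1)) •
    ∑ m ∈ Finset.range k, ((-1 : ℤ) ^ m) • p (F (x ∘ phX k b ∘ dlX m)) (F' (x ∘ sgX k)) with hL
  set R : ℕ → C := fun k => ((-1 : ℤ) ^ ((a + 1 + k + 1) * b + k + 1)) •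
    ∑ r ∈ Finset.range (a - k), ((-1 : ℤ) ^ (k + 2 + r)) •
      p (F (x ∘ phX k b ∘ dlX (k + 2 + r))) (F' (x ∘ sgX k)) with hR
  set Q : ℕ → C := fun k => ((-1 : ℤ) ^ ((a + 1 + k + 1) * b + k + 1)) •
    ((-1 : ℤ) ^ (k + 1)) • p (F (x ∘ phX k (b + 1))) (F' (x ∘ sgX k)) with hQ
  set P : ℕ → C := fun k => ((-1 : ℤ) ^ ((a + 1 + k + 1) * b + k + 1)) •
    ((-1 : ℤ) ^ k) • p (F (x ∘ phX k b ∘ dlX k)) (F' (x ∘ sgX k)) with hP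
  have T2 : c1X p (a + 1) b (DX (a + 1) F) F' x = ∑ k ∈ Finset.range (a + 1),
      (L k + P k + Q k + R k) := by
    unfold c1X DX
    refine Finset.sum_congr rfl fun k hk => ?_
    have hk := Finset.mem_range.1 hk
    have hn : a + 1 + 1 = k + 1 + 1 + (a - k) := by omega
    rw [map_sum, AddMonoidHom.finsetSum_apply]
    rw [hn, Finset.sum_range_add, Finset.sum_range_succ, Finset.sum_range_succ]
    simp only [hL, hP, hQ, hR, map_zsmul, AddMonoidHom.zsmul_apply, ← smul_add]
    have q1 : (x ∘ phX k b) ∘ dlX (k + 1) = x ∘ phX k (b + 1) := by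
      funext t; simp only [Function.comp, dlX, phX]; congr 1
      grind
    rw [q1]
    rfl
  rw [T1, T2]
  have hLs : ∀ k, s k • (∑ m ∈ Finset.range (k + 1), ((-1 : ℤ) ^ m) •
          p (F (x ∘ phX (k + 1) b ∘ dlX m)) (F' (x ∘ sgX (k + 1)))) = - L (k + 1) := by
    intro k
    simp only [hL, signB, hs]
    module
  have hRs : ∀ k, s k • (∑ r ∈ Finset.range (a - k), ((-1 : ℤ) ^ (k + b + 1 + r)) •
          p (F (x ∘ phX k b ∘ dlX (k + 2 + r))) (F' (x ∘ sgX k))) = - R k := by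
    intro k
    simp only [hR, signA, hs, Finset.smul_sum, ← Finset.sum_neg_distrib]
    refine Finset.sum_congr rfl fun r _ => ?_
    rw [smul_smul, smul_smul, ← neg_smul]
    congr 1
    ring
  have hIs : ∀ k, s k • (-((-1 : ℤ) ^ k • p (F (x ∘ phX k (b + 1))) (F' (x ∘ sgX (k + 1))))
            + (-1 : ℤ) ^ (k + b) • p (F (x ∘ phX k (b + 1))) (F' (x ∘ sgX k)))
       = - P (k + 1) - Q k := by
    intro k
    have q1 : x ∘ phX (k + 1) b ∘ dlX (k + 1) = x ∘ phX k (b + 1) := by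
      funext t; simp only [Function.comp, dlX, phX]; congr 1
      grind
    simp only [hP, hQ, q1]
    rw [signB, signA]
    simp only [hs]
    rw [pow_add _ k b, pow_succ _ k]
    module
  simp only [hLs, hRs, hIs]
  have hL0 : L 0 = 0 := by simp [hL]
  have hR0 : R a = 0 := by simp [hR]
  have hP0 : P 0 = - (((-1 : ℤ) ^ (a * b)) • p (F (x ∘ sgX b)) (F' x)) := by
    have q1 : x ∘ phX 0 b ∘ dlX 0 = x ∘ sgX b := by
      funext t; simp only [Function.comp, dlX, phX, sgX]; congr 1
      grind
    have q2 : x ∘ sgX 0 = x := rfl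
    simp only [hP, q1, q2]
    have : (a + 1 + 0 + 1) * b + 0 + 1 = a * b + 2 * b + 1 := by ring
    rw [this, pow_succ, pow_add, pow_mul]
    simp
  have hQa : Q a = p (F x) (F' (x ∘ sgX a)) := by
    have q1 : F (x ∘ phX a (b + 1)) = F x := by
      apply hF; intro t ht; simp only [Function.comp, phX]; congr 1
      split_ifs; omega
    simp only [hQ, q1]
    have : (a + 1 + a + 1) * b + a + 1 = 2 * ((a + 1) * b) + (a + 1) := by ring
    rw [this, pow_add _ (2 * _), pow_mul, smul_smul, mul_assoc, ← pow_add, ← two_mul (a + 1), pow_mul]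
    simp
  simp only [Finset.sum_add_distrib, Finset.sum_sub_distrib, Finset.sum_neg_distrib]
  rw [Finset.sum_range_succ' L, Finset.sum_range_succ' P, Finset.sum_range_succ Q,
    Finset.sum_range_succ R, hL0, hR0, hP0, hQa]
  abel

def homX {G Δ M : Type*} [Group G] [Group Δ] [AddCommGroup M] [DistribMulAction Δ M]
    (f : G →* Δ) {n : ℕ} (c : (Fin n → G) → M) (x : ℕ → G) : M :=
  f (x 0) • c (fun t => (x t)⁻¹ * x (t + 1))

def ppX {G : Type*} [Group G] {n : ℕ} (y : Fin n → G) (k : ℕ) : G :=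
  ((List.ofFn y).take k).prod

theorem ppX_zero {G : Type*} [Group G] {n : ℕ} (y : Fin n → G) : ppX y 0 = 1 := by
  simp [ppX]

theorem ppX_succ {G : Type*} [Group G] {n : ℕ} (y : Fin n → G) (k : ℕ) (hk : k < n) :
    ppX y (k + 1) = ppX y k * y ⟨k, hk⟩ := by
  unfold ppX
  rw [List.prod_take_succ _ _ (by simpa using hk)]
  simp

theorem ppX_diff {G : Type*} [Group G] {n : ℕ} (y : Fin n → G) (k : ℕ) (hk : k < n) :
    (ppX y k)⁻¹ * ppX y (k + 1) = y ⟨k, hk⟩ := by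
  rw [ppX_succ y k hk]; group

theorem ppX_cast {G : Type*} [Group G] {a b : ℕ} (h : a = b) (y : Fin b → G) :
    ppX (fun t => y (Fin.cast h t)) = ppX y := by
  subst h; rfl

theorem ppX_map {G H : Type*} [Group G] [Group H] (f : G →* H) {n : ℕ} (y : Fin n → G) :
    ppX (fun t => f (y t)) = fun k => f (ppX y k) := by
  funext k
  unfold ppX
  rw [map_list_prod, List.map_take, List.map_ofFn]
  rfl

theorem homX_pp {G Δ M : Type*} [Group G] [Group Δ] [AddCommGroup M] [DistribMulAction Δ M]
    (f : G →* Δ) {n : ℕ} (c : (Fin n → G) → M) (y : Fin n → G) : homX f c (ppX y) = c y := by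
  unfold homX
  rw [ppX_zero, map_one, one_smul]
  congr 1
  funext t
  exact ppX_diff y t t.2

def EqvX {G Δ M : Type*} [Group G] [Group Δ] [AddCommGroup M] [DistribMulAction Δ M]
    (f : G →* Δ) (F : (ℕ → G) → M) : Prop :=
  ∀ (g : G) (x : ℕ → G), F (fun t => g * x t) = f g • F x

section
variable {G Δ M : Type*} [Group G] [Group Δ] [AddCommGroup M] [DistribMulAction Δ M]
    (f : G →* Δ) {n : ℕ}

theorem homX_eqv (c : (Fin n → G) → M) : EqvX f (homX f c) := by
  intro g x
  simp only [homX, map_mul, mul_smul]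
  congr 3
  funext t
  group

theorem homX_loc (c : (Fin n → G) → M) : LocX n (homX f c) := by
  intro x y h
  unfold homX
  rw [h 0 (by omega)]
  congr 2
  funext t
  rw [h t (by omega), h (t + 1) (by omega)]

theorem homX_inv (F : (ℕ → G) → M) (hE : EqvX f F) (hL : LocX n F) (x : ℕ → G) :
    homX f (fun y : Fin n → G => F (ppX y)) x = F x := by
  have h : ∀ t, t ≤ n → ppX (fun t : Fin n => (x t)⁻¹ * x (t + 1)) t = (x 0)⁻¹ * x t := by
    intro t
    induction t with
    | zero => intro _; rw [ppX_zero]; group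
    | succ t ih =>
      intro ht
      rw [ppX_succ _ t (by omega), ih (by omega)]
      simp only []
      group
  unfold homX
  beta_reduce
  rw [hL _ _ h, hE, smul_smul, ← map_mul]
  simp

theorem DX_eqv (F : (ℕ → G) → M) (hE : EqvX f F) : EqvX f (DX n F) := by
  intro g x
  unfold DX
  rw [Finset.smul_sum]
  refine Finset.sum_congr rfl fun m _ => ?_
  rw [smul_comm, ← hE]
  rfl

theorem DX_loc (F : (ℕ → G) → M) (hL : LocX n F) : LocX (n + 1) (DX (n + 1) F) := by
  intro x y h
  unfold DX
  refine Finset.sum_congr rfl fun m _ => ?_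
  congr 1
  apply hL
  intro t ht
  simp only [Function.comp, dlX]
  apply h
  grind

theorem dRel_eq (c : (Fin n → G) → M) (y : Fin (n + 1) → G) :
    dRel f c y = DX (n + 1) (homX f c) (ppX y) := by
  unfold dRel DX
  rw [Finset.sum_range_succ, Finset.sum_range_succ', add_comm (∑ k ∈ _, _), Finset.sum_range]
  congr 1
  · congr 1
    · rw [pow_zero, one_smul]
      unfold homX
      have e : ∀ t, (ppX y ∘ dlX 0) t = ppX y (t + 1) := fun t => rfl
      simp only [e]
      rw [ppX_succ y 0 (by omega), ppX_zero, one_mul]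
      congr 2
      funext t
      exact (ppX_diff y (t + 1) (by omega)).symm
    · refine Finset.sum_congr rfl fun k _ => ?_
      congr 1
      unfold homX
      have e : (ppX y ∘ dlX (k + 1)) 0 = 1 := ppX_zero y
      rw [e, map_one, one_smul]
      congr 1
      funext t
      simp only [contractG, Function.comp, dlX]
      rcases lt_trichotomy (t : ℕ) k with h | h | h
      · rw [if_pos h, if_pos (by omega), if_pos (by omega)]
        exact (ppX_diff y t (by omega)).symm
      · rw [if_neg (by omega), if_pos h, if_pos (by omega), if_neg (by omega)]
        rw [ppX_succ y (t + 1) (by omega), ppX_succ y t (by omega), mul_assoc, inv_mul_cancel_left]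
        rfl
      · rw [if_neg (by omega), if_neg (by omega), if_neg (by omega), if_neg (by omega)]
        exact (ppX_diff y (t + 1) (by omega)).symm
  · congr 1
    unfold homX
    have e : (ppX y ∘ dlX (n + 1)) 0 = 1 := ppX_zero y
    rw [e, map_one, one_smul]
    congr 1
    funext t
    simp only [Function.comp, dlX]
    rw [if_pos (by omega), if_pos (by omega)]
    exact (ppX_diff y t (by omega)).symm

theorem DX_homX (c : (Fin n → G) → M) (x : ℕ → G) :
    DX (n + 1) (homX f c) x = homX f (dRel f c) x := by
  rw [← homX_inv f _ (DX_eqv f _ (homX_eqv f c)) (DX_loc _ (homX_loc f c))]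
  congr 1
  funext y
  exact (dRel_eq f c y).symm

theorem dRel_pp (F : (ℕ → G) → M) (hE : EqvX f F) (hL : LocX n F) (y : Fin (n + 1) → G) :
    dRel f (fun y : Fin n → G => F (ppX y)) y = DX (n + 1) F (ppX y) := by
  rw [dRel_eq]
  congr 1
  funext x
  exact homX_inv f F hE hL x

end

theorem cupP_eq {G Δ A B C : Type*} [Group G] [Group Δ] [AddCommGroup A] [AddCommGroup B]
    [AddCommGroup C] [DistribMulAction Δ A] [DistribMulAction Δ B] (f : G →* Δ) (p : A →+ B →+ C)
    {i j : ℕ} (c : (Fin i → G) → A) (c' : (Fin j → G) → B) (y : Fin (i + j) → G) :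
    cupP f p c c' y = p (homX f c (ppX y)) (homX f c' (ppX y ∘ sgX i)) := by
  have hpp : ∀ k, k ≤ i → ppX (fun t : Fin i => y (Fin.castAdd j t)) k = ppX y k := by
    intro k
    induction k with
    | zero => intro _; rw [ppX_zero, ppX_zero]
    | succ k ih => intro hk; rw [ppX_succ _ k (by omega), ppX_succ _ k (by omega), ih (by omega)]; rfl
  unfold cupP
  congr 1
  · rw [← homX_loc f c _ _ hpp, homX_pp]
  · unfold homX
    have e : (List.ofFn (fun t : Fin i => y (Fin.castAdd j t))).prod = (ppX y ∘ sgX i) 0 := by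
      have : (ppX y ∘ sgX i) 0 = ppX y i := by simp [sgX]
      rw [this, ← hpp i le_rfl, ppX, List.take_of_length_le (by simp)]
    rw [e]
    congr 2
    funext t
    simp only [Function.comp, sgX]
    rw [show (t : ℕ) + 1 + i = t + i + 1 by omega, ppX_diff y (t + i) (by omega)]
    congr 1
    ext
    simp [add_comm]

theorem c1X_eqv {G Δ A B C : Type*} [Group G] [Group Δ] [AddCommGroup A] [AddCommGroup B]
    [AddCommGroup C] [DistribMulAction Δ A] [DistribMulAction Δ B] [DistribMulAction Δ C]
    (f : G →* Δ) (p : A →+ B →+ C)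
    (hp : ∀ (g : Δ) (a : A) (b : B), p (g • a) (g • b) = g • p a b)
    (a b : ℕ) (F : (ℕ → G) → A) (F' : (ℕ → G) → B) (h : EqvX f F) (h' : EqvX f F') :
    EqvX f (c1X p a b F F') := by
  intro g x
  unfold c1X
  rw [Finset.smul_sum]
  refine Finset.sum_congr rfl fun m _ => ?_
  rw [smul_comm, ← hp, ← h, ← h']
  rfl

theorem c1X_loc {X A B C : Type*} [AddCommGroup A] [AddCommGroup B] [AddCommGroup C]
    (p : A →+ B →+ C)
    (a b m : ℕ) (hm : a + b = m + 1) (F : (ℕ → X) → A) (F' : (ℕ → X) → B)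
    (h : LocX a F) (h' : LocX b F') :
    LocX m (c1X p a b F F') := by
  intro x y hxy
  unfold c1X
  refine Finset.sum_congr rfl fun k hk => ?_
  have hk := Finset.mem_range.1 hk
  rw [h (x ∘ phX k b) (y ∘ phX k b), h' (x ∘ sgX k) (y ∘ sgX k)]
  · intro t ht
    exact hxy _ (by simp only [sgX]; omega)
  · intro t ht
    exact hxy _ (by simp only [phX]; grind)

/-- Graded commutativity of the cup products on relative (mapping cone) cohomology:
for a relative class `(α,β) ∈ H^{i+1}(Δ,π;A)` and `γ ∈ H^j(Δ,B)`, the classes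
`(α,β) ∪ γ = (α ∪ γ, β ∪ γ|_π)` and `γ ∪ (α,β) = (γ ∪ α, (-1)^j γ|_π ∪ β)` satisfy
`(α,β) ∪ γ = (-1)^{(i+1)j}·γ ∪ (α,β)`, i.e. their difference is a relative coboundary
`d(u,w) = (du, -u|_π - dw)`. -/
theorem stmt16 {Δ ι : Type*} [Group Δ] {P : ι → Type*} [∀ v, Group (P v)]
    (f : ∀ v, P v →* Δ)
    {A B C : Type*} [AddCommGroup A] [AddCommGroup B] [AddCommGroup C]
    [DistribMulAction Δ A] [DistribMulAction Δ B] [DistribMulAction Δ C]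
    (p : A →+ B →+ C)
    (hp : ∀ (g : Δ) (a : A) (b : B), p (g • a) (g • b) = g • p a b)
    {i j : ℕ}
    (α : (Fin (i + 1) → Δ) → A) (β : ∀ v, (Fin i → P v) → A)
    (γ : (Fin j → Δ) → B)
    (hrel₁ : dRel (MonoidHom.id Δ) α = 0)
    (hrel₂ : ∀ v (y : Fin (i + 1) → P v),
      - α (fun t => f v (y t)) - dRel (f v) (β v) y = 0)
    (hγ : dRel (MonoidHom.id Δ) γ = 0) :
    ∃ u : (Fin (i + j) → Δ) → C,
      (∀ y : Fin (i + 1 + j) → Δ,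
        cupP (MonoidHom.id Δ) p α γ y
            - ((-1 : ℤ) ^ ((i + 1) * j)) •
              castC (by omega) (cupP (MonoidHom.id Δ) p.flip γ α) y
          = castC (by omega) (dRel (MonoidHom.id Δ) u) y) ∧
      (i + j = 0 → ∀ v (y : Fin (i + j) → P v),
        cupP (f v) p (β v) (fun z => γ (fun t => f v (z t))) y
            - ((-1 : ℤ) ^ ((i + 1) * j)) • ((-1 : ℤ) ^ j) •
              castC (by omega)
                (cupP (f v) p.flip (fun z => γ (fun t => f v (z t))) (β v)) y
          = - u (fun t => f v (y t))) ∧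
      (∀ m : ℕ, ∀ _hm : i + j = m + 1,
        ∃ w : ∀ v, (Fin m → P v) → C,
          ∀ v (y : Fin (i + j) → P v),
            cupP (f v) p (β v) (fun z => γ (fun t => f v (z t))) y
                - ((-1 : ℤ) ^ ((i + 1) * j)) • ((-1 : ℤ) ^ j) •
                  castC (by omega)
                    (cupP (f v) p.flip (fun z => γ (fun t => f v (z t))) (β v)) y
              = - u (fun t => f v (y t)) - castC (by omega) (dRel (f v) (w v)) y) := by
  have hDγ : ∀ x, DX (j + 1) (homX (MonoidHom.id Δ) γ) x = 0 := by
    intro x; rw [DX_homX, hγ]; simp [homX]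
  have hDα : ∀ x, DX (i + 1 + 1) (homX (MonoidHom.id Δ) α) x = 0 := by
    intro x; rw [DX_homX, hrel₁]; simp [homX]
  have hres : ∀ v x, homX (f v) (fun z : Fin j → P v => γ (fun t => f v (z t))) x
      = homX (MonoidHom.id Δ) γ (fun t => f v (x t)) := by
    intro v x
    simp [homX]
  have hDβ : ∀ v x, DX (i + 1) (homX (f v) (β v)) x
      = - homX (MonoidHom.id Δ) α (fun t => f v (x t)) := by
    intro v x
    rw [DX_homX]
    have : dRel (f v) (β v) = fun y => - α (fun t => f v (y t)) := by
      funext y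
      exact (sub_eq_zero.1 (hrel₂ v y)).symm
    rw [this]
    simp [homX]
  have hDres : ∀ v x, DX (j + 1)
      (homX (f v) (fun z : Fin j → P v => γ (fun t => f v (z t)))) x = 0 := by
    intro v x
    rw [← hDγ (fun t => f v (x t))]
    unfold DX
    refine Finset.sum_congr rfl fun m _ => ?_
    rw [hres]
    rfl
  -- the main identity for the second components
  have key : ∀ v (y : Fin (i + j) → P v),
      cupP (f v) p (β v) (fun z => γ (fun t => f v (z t))) y
            - ((-1 : ℤ) ^ ((i + 1) * j)) • ((-1 : ℤ) ^ j) •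
              castC (by omega)
                (cupP (f v) p.flip (fun z => γ (fun t => f v (z t))) (β v)) y
      = - c1X p (i + 1) j (homX (MonoidHom.id Δ) α) (homX (MonoidHom.id Δ) γ)
            (ppX (fun t => f v (y t)))
        + DX (i + j) (c1X p i j (homX (f v) (β v))
            (homX (f v) (fun z : Fin j → P v => γ (fun t => f v (z t))))) (ppX y) := by
    intro v y
    have h := c1X_main p i j (homX (f v) (β v))
      (homX (f v) (fun z : Fin j → P v => γ (fun t => f v (z t))))
      (homX_loc _ _) (homX_loc _ _) (hDres v) (ppX y)
    have h2 : c1X p (i + 1) j (DX (i + 1) (homX (f v) (β v)))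
        (homX (f v) (fun z : Fin j → P v => γ (fun t => f v (z t)))) (ppX y)
        = - c1X p (i + 1) j (homX (MonoidHom.id Δ) α) (homX (MonoidHom.id Δ) γ)
            (ppX (fun t => f v (y t))) := by
      rw [ppX_map]
      unfold c1X
      rw [← Finset.sum_neg_distrib]
      refine Finset.sum_congr rfl fun k _ => ?_
      rw [hDβ, hres, map_neg, AddMonoidHom.neg_apply, smul_neg]
      rfl
    rw [h2, add_comm (DX _ _ _)] at h
    rw [← h, cupP_eq, castC, cupP_eq, ppX_cast, smul_smul, ← pow_add,
      show (i + 1) * j + j = i * j + 2 * j by ring, pow_add, pow_mul _ 2]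
    simp
  refine ⟨fun y => c1X p (i + 1) j (homX (MonoidHom.id Δ) α) (homX (MonoidHom.id Δ) γ) (ppX y),
    ?_, ?_, ?_⟩
  · intro y
    have h := c1X_main p (i + 1) j (homX (MonoidHom.id Δ) α) (homX (MonoidHom.id Δ) γ)
      (homX_loc _ _) (homX_loc _ _) hDγ (ppX y)
    have h2 : c1X p (i + 1 + 1) j (DX (i + 1 + 1) (homX (MonoidHom.id Δ) α))
        (homX (MonoidHom.id Δ) γ) (ppX y) = 0 := by
      unfold c1X
      refine Finset.sum_eq_zero fun k _ => ?_
      rw [hDα]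
      simp
    rw [h2, add_zero] at h
    simp only [castC]
    rw [cupP_eq, cupP_eq, ppX_cast, dRel_pp _ _
      (c1X_eqv _ p hp _ _ _ _ (homX_eqv _ _) (homX_eqv _ _))
      (c1X_loc p _ _ _ (by omega) _ _ (homX_loc _ _) (homX_loc _ _)), ppX_cast]
    rw [show i + j + 1 = i + 1 + j by omega, ← h]
    rfl
  · intro hij v y
    rw [key]
    have hi : i = 0 := by omega
    subst hi
    simp [DX, c1X]
  · intro m hm
    refine ⟨fun v y => - c1X p i j (homX (f v) (β v))
            (homX (f v) (fun z : Fin j → P v => γ (fun t => f v (z t)))) (ppX y), ?_⟩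
    intro v y
    rw [key, sub_eq_add_neg]
    congr 1
    simp only [castC]
    have hE := c1X_eqv (f v) p hp i j _ _ (homX_eqv (f v) (β v))
      (homX_eqv (f v) (fun z : Fin j → P v => γ (fun t => f v (z t))))
    have hL := c1X_loc p i j m hm _ _ (homX_loc (f v) (β v))
      (homX_loc (f v) (fun z : Fin j → P v => γ (fun t => f v (z t))))
    rw [dRel_pp (f v) (fun x => - c1X p i j (homX (f v) (β v))
            (homX (f v) (fun z : Fin j → P v => γ (fun t => f v (z t)))) x)
      (fun g x => by beta_reduce; rw [hE g x, smul_neg])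
      (fun x y h => by beta_reduce; rw [hL x y h]), ppX_cast, ← hm]
    simp [DX]
end
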